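/- arXiv:1603.06178 — 2 statements merged into one kernel-verified Lean document; each statement's English description precedes it below -/
import Mathlib

section
/- Suppose the NICF expansion of α has ε_i = +1 for all i (so it coincides with the regular continued fraction expansion of α, all of whose partial quotients satisfy a_i ≥ 2), that R := liminf_{i→∞} a_i satisfies 4 ≤ R < ∞, and that γ ∈ [0,1), γ ∉ ℤ + αℤ, satisfies M(α,γ) > M(α,γ_*) − R_*^{−3}. Let (c_i) be the coefficients of the alpha-expansion of γ (c_{i+1} := ⌊γ_i/α_i⌋ with γ_0 := γ, γ_{i+1} := {γ_i/α_i}) and t_i := 2c_i − (a_i − 1 + ε_i) = 2c_i − a_i. Then |t_i| < 2a_i/(R_* − 1) for all but finitely many i; and for all but finitely many indices k with a_k = R: t_k ∈ {−1, +1} if R is odd, and t_k = 0 if R is even. -/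
open Filter Finset

attribute [local instance] Classical.propDecidable

/-- Distance from `x` to the nearest integer, `‖x‖`. -/
noncomputable def nint (x : ℝ) : ℝ := |x - round x|

/-- The two-sided inhomogeneous approximation constant
`M(α,γ) = liminf_{|n|→∞} |n|·‖nα-γ‖`. -/
noncomputable def Mval (α γ : ℝ) : ℝ :=
  Filter.liminf (fun n : ℤ => (|n| : ℝ) * nint (n * α - γ)) Filter.cofinite

/-- `ρ(α) = sup { M(α,γ) : γ ∉ ℤ + αℤ }`. -/
noncomputable def rho (α : ℝ) : ℝ :=
  sSup {m : ℝ | ∃ γ : ℝ, (¬∃ p q : ℤ, γ = (p : ℝ) + (q : ℝ) * α) ∧ m = Mval α γ}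

/-- The tails `α_i` of the nearest integer continued fraction expansion of `α`. -/
noncomputable def nicfT (α : ℝ) : ℕ → ℝ
  | 0 => α
  | i + 1 =>
    if Int.fract (nicfT α i)⁻¹ ≤ 1 / 2 then Int.fract (nicfT α i)⁻¹
    else 1 - Int.fract (nicfT α i)⁻¹

/-- The partial quotients `a_i` (meaningful for `i ≥ 1`) of the NICF expansion. -/
noncomputable def nicfA (α : ℝ) : ℕ → ℤ
  | 0 => 0
  | i + 1 => if Int.fract (nicfT α i)⁻¹ ≤ 1 / 2 then ⌊(nicfT α i)⁻¹⌋ else ⌈(nicfT α i)⁻¹⌉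

/-- The signs `ε_i` of the NICF expansion (`ε_1 = 1`). -/
noncomputable def nicfE (α : ℝ) : ℕ → ℤ
  | 0 => 1
  | 1 => 1
  | i + 2 => if Int.fract (nicfT α i)⁻¹ ≤ 1 / 2 then 1 else -1

/-- `nicfD α n = D_{n-1} = α_0 α_1 ⋯ α_{n-1}` (so `nicfD α 0 = 1`, `nicfD α 1 = α`). -/
noncomputable def nicfD (α : ℝ) (n : ℕ) : ℝ := ∏ j ∈ Finset.range n, nicfT α j

/-- The number of indices `1 ≤ k ≤ i` with `a_k` odd. -/
noncomputable def oddIdx (α : ℝ) (i : ℕ) : ℕ :=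
  ((Finset.Icc 1 i).filter fun k => Odd (nicfA α k)).card

/-- `λ_i`: zero if `a_i` is even, `(-1)^j` if `a_i = a_{n_j}` is the `j`-th odd partial
quotient. -/
noncomputable def lamStar (α : ℝ) (i : ℕ) : ℤ :=
  if Odd (nicfA α i) then (-1) ^ oddIdx α i else 0

/-- `γ_* = Σ_{i≥1} (a_i - 1 + ε_i + λ_i)/2 · D_{i-1}`. -/
noncomputable def gammaStar (α : ℝ) : ℝ :=
  ∑' k : ℕ,
    (((nicfA α (k + 1) : ℝ) - 1 + (nicfE α (k + 1) : ℝ) + (lamStar α (k + 1) : ℝ)) / 2) *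
      nicfD α (k + 1)

/-- `λ'_i`: zero if `a_i` is even, one if `a_i` is odd. -/
noncomputable def lamStar2 (α : ℝ) (i : ℕ) : ℤ := if Odd (nicfA α i) then 1 else 0

/-- `γ_** = Σ_{i≥1} (a_i + λ'_i)/2 · D_{i-1}`. -/
noncomputable def gammaStar2 (α : ℝ) : ℝ :=
  ∑' k : ℕ, (((nicfA α (k + 1) : ℝ) + (lamStar2 α (k + 1) : ℝ)) / 2) * nicfD α (k + 1)

/-- The denominators `q_i`: `q_0 = 1`, `q_1 = a_1`, `q_i = a_i q_{i-1} + ε_i q_{i-2}`. -/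
noncomputable def qseq (α : ℝ) : ℕ → ℤ
  | 0 => 1
  | 1 => nicfA α 1
  | i + 2 => nicfA α (i + 2) * qseq α (i + 1) + nicfE α (i + 2) * qseq α i

/-- `ᾱ_i = q_{i-1}/q_i` (with `ᾱ_0 = 0`). -/
noncomputable def abar (α : ℝ) (i : ℕ) : ℝ :=
  if i = 0 then 0 else (qseq α (i - 1) : ℝ) / (qseq α i : ℝ)

/-- `δ_i = -(-ε_1)(-ε_2)⋯(-ε_{i+1})`. -/
noncomputable def deltaSeq (α : ℝ) (i : ℕ) : ℤ := -∏ j ∈ Finset.Icc 1 (i + 1), (-nicfE α j)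

/-- `d_n^- = (Σ_{i=1}^n t_i δ_{i-1} q_{i-1}) / (δ_{n-1} q_n)` for `γ_*` (so `t_i = λ_i`). -/
noncomputable def dminus (α : ℝ) (n : ℕ) : ℝ :=
  (∑ i ∈ Finset.Icc 1 n, (lamStar α i : ℝ) * (deltaSeq α (i - 1) : ℝ) * (qseq α (i - 1) : ℝ)) /
    ((deltaSeq α (n - 1) : ℝ) * (qseq α n : ℝ))

/-- `d_n^+ = (Σ_{i=n+1}^∞ t_i D_{i-1}) / D_{n-1}` for `γ_*` (so `t_i = λ_i`). -/
noncomputable def dplus (α : ℝ) (n : ℕ) : ℝ :=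
  (∑' k : ℕ, (lamStar α (n + 1 + k) : ℝ) * nicfD α (n + 1 + k)) / nicfD α n

/-- `d_n^-` for `γ_**` (so `t_i = λ'_i`). -/
noncomputable def dminus2 (α : ℝ) (n : ℕ) : ℝ :=
  (∑ i ∈ Finset.Icc 1 n, (lamStar2 α i : ℝ) * (deltaSeq α (i - 1) : ℝ) * (qseq α (i - 1) : ℝ)) /
    ((deltaSeq α (n - 1) : ℝ) * (qseq α n : ℝ))

/-- `d_n^+` for `γ_**` (so `t_i = λ'_i`). -/
noncomputable def dplus2 (α : ℝ) (n : ℕ) : ℝ :=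
  (∑' k : ℕ, (lamStar2 α (n + 1 + k) : ℝ) * nicfD α (n + 1 + k)) / nicfD α n

/-- `i ∈ S(γ_*)`: `|d_i^-| ≤ 1 - ᾱ_i` and `-(1-ε_{i+1}α_i) ≤ d_i^+ ≤ 1+ε_{i+1}α_i`. -/
def inS (α : ℝ) (i : ℕ) : Prop :=
  |dminus α i| ≤ 1 - abar α i ∧
    -(1 - (nicfE α (i + 1) : ℝ) * nicfT α i) ≤ dplus α i ∧
      dplus α i ≤ 1 + (nicfE α (i + 1) : ℝ) * nicfT α i

/-- `i ∈ S(γ_**)`. -/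
def inS2 (α : ℝ) (i : ℕ) : Prop :=
  |dminus2 α i| ≤ 1 - abar α i ∧
    -(1 - (nicfE α (i + 1) : ℝ) * nicfT α i) ≤ dplus2 α i ∧
      dplus2 α i ≤ 1 + (nicfE α (i + 1) : ℝ) * nicfT α i

/-- The remainders `γ_i` of the alpha-expansion of `γ`: `γ_0 = γ`,
`γ_{i+1} = {γ_i/α_i}`. -/
noncomputable def gSeq (α γ : ℝ) : ℕ → ℝ
  | 0 => γ
  | i + 1 => Int.fract (gSeq α γ i / nicfT α i)

/-- The coefficients `c_i` (for `i ≥ 1`) of the alpha-expansion of `γ`: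
`c_{i+1} = ⌊γ_i/α_i⌋`. -/
noncomputable def cCoef (α γ : ℝ) (i : ℕ) : ℤ := ⌊gSeq α γ (i - 1) / nicfT α (i - 1)⌋

/-! ### Abstract continued fraction system -/

noncomputable def zq (a : ℕ → ℤ) : ℕ → ℝ
  | 0 => 0
  | 1 => 1
  | (k + 2) => (a k : ℝ) * zq a (k + 1) + zq a k

noncomputable def zD (A : ℕ → ℝ) : ℕ → ℝ
  | 0 => 1
  | (k + 1) => zD A k * A k

noncomputable def ze (a t : ℕ → ℤ) : ℕ → ℝ
  | 0 => 0
  | (k + 1) => (t k : ℝ) * zq a (k + 1) - ze a t k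

noncomputable def zb (a : ℕ → ℤ) (k : ℕ) : ℝ := zq a k / zq a (k + 1)

noncomputable def zd (a t : ℕ → ℤ) (k : ℕ) : ℝ := ze a t k / zq a (k + 1)

structure CFS (a : ℕ → ℤ) (A : ℕ → ℝ) : Prop where
  two : ∀ k, 2 ≤ a k
  pos : ∀ k, 0 < A k
  rel : ∀ k, A k * ((a k : ℝ) + A (k + 1)) = 1

structure TS (a t : ℕ → ℤ) (A T : ℕ → ℝ) (γ : ℝ) : Prop where
  par : ∀ k, Even (a k - t k)
  step : ∀ k, T k = A k * ((t k : ℝ) + T (k + 1))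
  ini : 2 * γ = 1 + A 0 + T 0

theorem zq_pos {a : ℕ → ℤ} {A : ℕ → ℝ} (h : CFS a A) (k : ℕ) :
    0 ≤ zq a k ∧ 0 < zq a (k + 1) := by
  induction k with
  | zero => simp [zq]
  | succ k ih =>
    refine ⟨ih.2.le, ?_⟩
    have h2 : (2 : ℝ) ≤ a k := by exact_mod_cast h.two k
    have : zq a (k + 1 + 1) = (a k : ℝ) * zq a (k + 1) + zq a k := by rw [zq]
    rw [this]
    nlinarith [ih.1, ih.2]

theorem zD_pos {a : ℕ → ℤ} {A : ℕ → ℝ} (h : CFS a A) (k : ℕ) : 0 < zD A k := by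
  induction k with
  | zero => simp [zD]
  | succ k ih => rw [zD]; exact mul_pos ih (h.pos k)

theorem A_le {a : ℕ → ℤ} {A : ℕ → ℝ} (h : CFS a A) (k : ℕ) {c : ℝ} (hc : c ≤ a k) :
    A k * c ≤ 1 := by
  have := h.rel k
  have h1 := h.pos k
  have h2 := h.pos (k + 1)
  nlinarith [mul_pos h1 h2, mul_le_mul_of_nonneg_left hc h1.le]

theorem A_half {a : ℕ → ℤ} {A : ℕ → ℝ} (h : CFS a A) (k : ℕ) : A k ≤ 1 / 2 := by
  have : (2 : ℝ) ≤ a k := by exact_mod_cast h.two k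
  have := A_le h k this
  linarith

theorem zD_le {a : ℕ → ℤ} {A : ℕ → ℝ} (h : CFS a A) (k : ℕ) : zD A k ≤ (1 / 2) ^ k := by
  induction k with
  | zero => simp [zD]
  | succ k ih =>
    rw [zD, pow_succ]
    exact mul_le_mul ih (A_half h k) (h.pos k).le (by positivity)

theorem zdet {a : ℕ → ℤ} {A : ℕ → ℝ} (h : CFS a A) (k : ℕ) :
    zq a (k + 1) * zD A k + zq a k * zD A (k + 1) = 1 := by
  induction k with
  | zero => simp [zq, zD]
  | succ k ih =>
    have h1 : zq a (k + 1 + 1) = (a k : ℝ) * zq a (k + 1) + zq a k := by rw [zq]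
    have h2 : zD A (k + 1) = zD A k * A k := by rw [zD]
    have h3 : zD A (k + 1 + 1) = zD A (k + 1) * A (k + 1) := by rw [zD]
    have := h.rel k
    rw [h1, h3]
    rw [h2] at ih ⊢
    linear_combination ih + zq a (k + 1) * zD A k * this

theorem zdet' {a : ℕ → ℤ} {A : ℕ → ℝ} (h : CFS a A) (k : ℕ) :
    zq a (k + 1) * zD A k * (1 + A k * zb a k) = 1 := by
  have h1 := zdet h k
  have h2 : zD A (k + 1) = zD A k * A k := by rw [zD]
  have h3 := (zq_pos h k).2
  have h4 : zq a (k + 1) * zb a k = zq a k := by unfold zb; field_simp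
  rw [h2] at h1
  linear_combination h1 + zD A k * A k * h4

theorem zb_rec {a : ℕ → ℤ} {A : ℕ → ℝ} (h : CFS a A) (k : ℕ) :
    zb a (k + 1) * ((a k : ℝ) + zb a k) = 1 := by
  have h1 : zq a (k + 1 + 1) = (a k : ℝ) * zq a (k + 1) + zq a k := by rw [zq]
  have h3 := (zq_pos h k).2
  have h4 := (zq_pos h (k + 1)).2
  unfold zb
  field_simp
  rw [h1]; ring

theorem zb_nonneg {a : ℕ → ℤ} {A : ℕ → ℝ} (h : CFS a A) (k : ℕ) : 0 ≤ zb a k :=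
  div_nonneg (zq_pos h k).1 (zq_pos h k).2.le

theorem zb_pos {a : ℕ → ℤ} {A : ℕ → ℝ} (h : CFS a A) (k : ℕ) : 0 < zb a (k + 1) :=
  div_pos (zq_pos h k).2 (zq_pos h (k + 1)).2

theorem zb_le {a : ℕ → ℤ} {A : ℕ → ℝ} (h : CFS a A) (k : ℕ) {c : ℝ} (hc : c ≤ a k) :
    zb a (k + 1) * c ≤ 1 := by
  have := zb_rec h k
  have h1 := zb_pos h k
  have h2 := zb_nonneg h k
  nlinarith [mul_nonneg h1.le h2, mul_le_mul_of_nonneg_left hc h1.le]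

theorem zd_rec {a : ℕ → ℤ} {A : ℕ → ℝ} (h : CFS a A) (t : ℕ → ℤ) (k : ℕ) :
    zd a t (k + 1) = zb a (k + 1) * ((t k : ℝ) - zd a t k) := by
  have h1 : ze a t (k + 1) = (t k : ℝ) * zq a (k + 1) - ze a t k := by rw [ze]
  have h3 := (zq_pos h k).2
  have h4 := (zq_pos h (k + 1)).2
  unfold zb zd
  rw [h1]
  field_simp

theorem pt_ex {a t : ℕ → ℤ} {A T : ℕ → ℝ} {γ : ℝ} (h : CFS a A) (ht : TS a t A T γ) (k : ℕ) :
    ∀ U' U : ℤ, Odd U' → Odd U → ∃ n m : ℤ,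
      (2 * (n : ℝ) - 1) = (-1) ^ (k + 1) * (-zq a (k + 1) * U' + zq a k * U + ze a t k) ∧
      2 * ((n : ℝ) * A 0 - γ - m) = zD A k * (U + A k * U' - T k) := by
  induction k with
  | zero =>
    rintro _ _ ⟨x, rfl⟩ ⟨y, rfl⟩
    refine ⟨x + 1, -y - 1, ?_, ?_⟩
    · simp [zq, ze]; ring
    · have := ht.ini
      simp [zD]
      linear_combination -this
  | succ k ih =>
    intro U' U hU' hU
    obtain ⟨n, m, h1, h2⟩ := ih (U - a k * U' + t k) U' (by
      obtain ⟨x, hx⟩ := hU'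
      obtain ⟨y, hy⟩ := hU
      obtain ⟨z, hz⟩ := ht.par k
      refine ⟨y - a k * x - z, ?_⟩
      rw [hx, hy]
      have : a k = t k + z + z := by omega
      rw [this]; ring) hU'
    refine ⟨n, m, ?_, ?_⟩
    · have e1 : zq a (k + 1 + 1) = (a k : ℝ) * zq a (k + 1) + zq a k := by rw [zq]
      have e2 : ze a t (k + 1) = (t k : ℝ) * zq a (k + 1) - ze a t k := by rw [ze]
      rw [h1, e1, e2, pow_succ (-1 : ℝ) (k + 1)]
      push_cast
      ring
    · have e1 : zD A (k + 1) = zD A k * A k := by rw [zD]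
      have e2 := ht.step k
      have e3 := h.rel k
      rw [h2, e1, e2]
      push_cast
      linear_combination -(zD A k * U') * e3

theorem pt_all {a t : ℕ → ℤ} {A T : ℕ → ℝ} {γ : ℝ} (h : CFS a A) (ht : TS a t A T γ)
    (n m : ℤ) : ∃ Z : ℕ → ℤ, (∀ k, Odd (Z k)) ∧ (∀ k, Z (k + 2) = a k * Z (k + 1) + Z k - t k) ∧
      (∀ k, (2 * (n : ℝ) - 1) =
        (-1) ^ (k + 1) * (-zq a (k + 1) * Z k + zq a k * Z (k + 1) + ze a t k)) ∧
      (∀ k, 2 * ((n : ℝ) * A 0 - γ - m) = zD A k * (Z (k + 1) + A k * Z k - T k)) := by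
  let F : ℕ → ℤ × ℤ := fun k => Nat.rec (2 * n - 1, -2 * m - 1)
    (fun k p => (p.2, a k * p.2 + p.1 - t k)) k
  have F1 : ∀ k, F (k + 1) = ((F k).2, a k * (F k).2 + (F k).1 - t k) := fun k => rfl
  have hrec : ∀ k, (F (k + 2)).1 = a k * (F (k + 1)).1 + (F k).1 - t k := by
    intro k
    rw [F1 (k + 1), F1 k]
  refine ⟨fun k => (F k).1, ?_, hrec, ?_, ?_⟩
  · have : ∀ k, Odd (F k).1 ∧ Odd (F (k + 1)).1 := by
      intro k
      induction k with
      | zero => exact ⟨⟨n - 1, by simp [F]; ring⟩, ⟨-m - 1, by simp [F]; ring⟩⟩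
      | succ k ih =>
        refine ⟨ih.2, ?_⟩
        rw [hrec k]
        obtain ⟨x, hx⟩ := ih.1
        obtain ⟨y, hy⟩ := ih.2
        obtain ⟨z, hz⟩ := ht.par k
        rw [hx, hy]
        refine ⟨a k * y + x + z, ?_⟩
        have : a k = t k + z + z := by omega
        rw [this]; ring
    exact fun k => (this k).1
  · intro k
    induction k with
    | zero => simp [zq, ze, F]
    | succ k ih =>
      have e1 : zq a (k + 1 + 1) = (a k : ℝ) * zq a (k + 1) + zq a k := by rw [zq]
      have e2 : ze a t (k + 1) = (t k : ℝ) * zq a (k + 1) - ze a t k := by rw [ze]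
      have e3 := hrec k
      show (2 * (n : ℝ) - 1) = (-1) ^ (k + 1 + 1) * (-zq a (k + 1 + 1) * ((F (k + 1)).1 : ℤ)
        + zq a (k + 1) * ((F (k + 2)).1 : ℤ) + ze a t (k + 1))
      rw [ih, e1, e2, e3, pow_succ (-1 : ℝ) (k + 1)]
      push_cast
      ring
  · intro k
    induction k with
    | zero =>
      have := ht.ini
      simp [zD, F]
      linear_combination -this
    | succ k ih =>
      have e1 : zD A (k + 1) = zD A k * A k := by rw [zD]
      have e2 := ht.step k
      have e3 := h.rel k
      have e4 := hrec k
      show _ = zD A (k + 1) * (((F (k + 2)).1 : ℤ) + A (k + 1) * ((F (k + 1)).1 : ℤ) - T (k + 1))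
      rw [ih, e1, e2, e4]
      push_cast
      linear_combination -(zD A k * ((F (k + 1)).1 : ℤ)) * e3

/-- the product at level `k`. -/
theorem prod_eq {a t : ℕ → ℤ} {A T : ℕ → ℝ} (h : CFS a A) (k : ℕ)
    (x y u' u : ℝ)
    (hx : x = (-1) ^ (k + 1) * (-zq a (k + 1) * u' + zq a k * u + ze a t k))
    (hy : y = zD A k * (u + A k * u' - T k)) :
    |x| * |y| * (1 + A k * zb a k) = |-u' + zb a k * u + zd a t k| * |u + A k * u' - T k| := by
  have h3 := (zq_pos h k).2
  have h5 := zD_pos h k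
  have e1 : -zq a (k + 1) * u' + zq a k * u + ze a t k =
      zq a (k + 1) * (-u' + zb a k * u + zd a t k) := by
    unfold zb zd; field_simp
  rw [hx, hy, e1, abs_mul, abs_mul, abs_mul, abs_pow, abs_neg, abs_one, one_pow, abs_of_pos h3,
    abs_of_pos h5]
  have := zdet' h k
  linear_combination (|-u' + zb a k * u + zd a t k| * |u + A k * u' - T k|) * this

/-! ### Upper bounds coming from the four corner points -/

theorem nint_le (x : ℝ) (z : ℤ) : nint x ≤ |x - z| := round_le x z

theorem nint_nonneg (x : ℝ) : 0 ≤ nint x := abs_nonneg _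

theorem upper {a t : ℕ → ℤ} {A T : ℕ → ℝ} {γ : ℝ} (h : CFS a A) (ht : TS a t A T γ)
    (hnl : ∀ n m : ℤ, (n : ℝ) * A 0 - γ ≠ m) {B : ℝ} (hB : ∀ k, |T k| ≤ B) {ν : ℝ}
    (hν : ν / 4 < Mval (A 0) γ) :
    ∀ᶠ k in atTop, ∀ U' U : ℤ, (U' = 1 ∨ U' = -1) → (U = 1 ∨ U = -1) →
      ν * (1 + A k * zb a k) <
        |-(U' : ℝ) + zb a k * U + zd a t k| * |(U : ℝ) + A k * U' - T k| := by
  obtain ⟨m0, hm1, hm2⟩ := exists_between hν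
  have hev : ∀ᶠ n : ℤ in cofinite, m0 < |(n : ℝ)| * nint (n * A 0 - γ) := by
    refine Filter.eventually_lt_of_lt_liminf hm2 ?_
    refine Filter.isBoundedUnder_of ⟨0, fun n => ?_⟩
    exact mul_nonneg (abs_nonneg _) (nint_nonneg _)
  have hfin : {n : ℤ | ¬ m0 < |(n : ℝ)| * nint (n * A 0 - γ)}.Finite := hev
  have hnpos : ∀ n : ℤ, 0 < nint (n * A 0 - γ) := by
    intro n
    refine abs_pos.mpr ?_
    intro h0
    exact hnl n (round ((n : ℝ) * A 0 - γ)) (by linarith)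
  obtain ⟨δ, hδ, hδ2⟩ : ∃ δ : ℝ, 0 < δ ∧ ∀ n : ℤ, nint (n * A 0 - γ) < δ →
      m0 < |(n : ℝ)| * nint (n * A 0 - γ) := by
    rcases hfin.toFinset.eq_empty_or_nonempty with he | hne
    · refine ⟨1, one_pos, fun n _ => ?_⟩
      by_contra hn
      have : n ∈ hfin.toFinset := by simpa using hn
      rw [he] at this
      simp at this
    · obtain ⟨n0, hn0, hmin⟩ := hfin.toFinset.exists_min_image
        (fun n : ℤ => nint (n * A 0 - γ)) hne
      refine ⟨nint (n0 * A 0 - γ), hnpos n0, fun n hn => ?_⟩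
      by_contra hc
      have : n ∈ hfin.toFinset := by simpa using hc
      exact absurd (hmin n this) (not_le.mpr hn)
  have hB0 : 0 ≤ B := (abs_nonneg _).trans (hB 0)
  have hlim : Tendsto (fun k : ℕ => ((1 : ℝ) / 2) ^ k * (2 + B)) atTop (nhds (0 * (2 + B))) :=
    (tendsto_pow_atTop_nhds_zero_of_lt_one (by norm_num) (by norm_num)).mul_const _
  rw [zero_mul] at hlim
  have hpos : 0 < min δ (4 * m0 - ν) := lt_min hδ (by linarith)
  filter_upwards [hlim.eventually (gt_mem_nhds hpos)] with k hk U' U hU' hU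
  have hkδ := lt_of_lt_of_le hk (min_le_left _ _)
  have hkν := lt_of_lt_of_le hk (min_le_right _ _)
  have hoU' : Odd U' := by rcases hU' with rfl | rfl <;> decide
  have hoU : Odd U := by rcases hU with rfl | rfl <;> decide
  have haU' : |(U' : ℝ)| = 1 := by rcases hU' with rfl | rfl <;> simp
  have haU : |(U : ℝ)| = 1 := by rcases hU with rfl | rfl <;> simp
  obtain ⟨n, m, h1, h2⟩ := pt_ex h ht k U' U hoU' hoU
  have hprod := prod_eq (T := T) h k _ _ _ _ h1 h2
  have hD := zD_pos h k
  have hYb : |(U : ℝ) + A k * U' - T k| ≤ 2 + B := by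
    have hA1 := A_half h k
    have hA0 := h.pos k
    calc |(U : ℝ) + A k * U' - T k| ≤ |(U : ℝ) + A k * U'| + |T k| := abs_sub _ _
      _ ≤ |(U : ℝ)| + |A k * U'| + |T k| := by gcongr; exact abs_add_le _ _
      _ ≤ 2 + B := by
        rw [abs_mul, haU, haU', abs_of_pos hA0]
        linarith [hB k]
  have hyb : |2 * ((n : ℝ) * A 0 - γ - m)| ≤ (1 / 2) ^ k * (2 + B) := by
    rw [h2, abs_mul, abs_of_pos hD]
    exact mul_le_mul (zD_le h k) hYb (abs_nonneg _) (by positivity)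
  have hni := nint_le ((n : ℝ) * A 0 - γ) m
  have hy2 : |2 * ((n : ℝ) * A 0 - γ - m)| = 2 * |(n : ℝ) * A 0 - γ - m| := by
    rw [abs_mul]; norm_num
  have hbig := hδ2 n (by
    have := abs_nonneg ((n : ℝ) * A 0 - γ - m)
    linarith)
  have hn1 : 2 * |(n : ℝ)| ≤ |2 * (n : ℝ) - 1| + 1 := by
    have : |2 * (n : ℝ)| ≤ |2 * (n : ℝ) - 1| + |(1 : ℝ)| := by
      have := abs_add_le (2 * (n : ℝ) - 1) 1
      simpa using this
    rw [abs_mul] at this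
    norm_num at this
    exact this
  rw [← hprod]
  have hf : 0 < 1 + A k * zb a k := by
    have := mul_nonneg (h.pos k).le (zb_nonneg h k)
    linarith
  refine mul_lt_mul_of_pos_right ?_ hf
  have e1 : |(n : ℝ)| * nint (n * A 0 - γ) ≤ |(n : ℝ)| * |(n : ℝ) * A 0 - γ - m| :=
    mul_le_mul_of_nonneg_left hni (abs_nonneg _)
  have e2 := mul_le_mul_of_nonneg_right hn1 (abs_nonneg (2 * ((n : ℝ) * A 0 - γ - m)))
  rw [hy2] at e2 hyb ⊢
  nlinarith

/-- sign analysis: the cell is divided. -/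
theorem signs {α β d T g ν : ℝ} (hα0 : 0 < α) (hα : α ≤ 1 / 4) (hβ0 : 0 ≤ β) (hβ : β ≤ 1 / 4)
    (hν : 1 / 2 ≤ ν) (hT : T = 2 * g - 1 - α) (hg0 : 0 ≤ g) (hg1 : g < 1)
    (hX0 : -(2 * β) ≤ 1 - β + d) (hX1 : 1 - β + d ≤ 2)
    (s1 : ν * (1 + α * β) < |1 - β + d| * |1 + α + T|)
    (s2 : ν * (1 + α * β) < |1 + β + d| * |1 - α - T|)
    (s3 : ν * (1 + α * β) < |1 + β - d| * |1 - α + T|)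
    (s4 : ν * (1 + α * β) < |1 - β - d| * |1 + α - T|) :
    0 ≤ 1 - β + d ∧ 0 ≤ 1 - β - d ∧ 0 ≤ 1 - α + T ∧ 0 ≤ 1 - α - T := by
  have hαβ := mul_nonneg hα0.le hβ0
  have hh : 1 / 2 ≤ ν * (1 + α * β) := by nlinarith
  subst hT
  have hTm : 0 ≤ 1 - α - (2 * g - 1 - α) := by linarith
  have e1 : |1 + α + (2 * g - 1 - α)| = 2 * g := by rw [abs_of_nonneg] <;> linarith
  have e2 : |1 - α - (2 * g - 1 - α)| = 2 * (1 - g) := by rw [abs_of_nonneg] <;> linarith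
  have e4 : |1 + α - (2 * g - 1 - α)| = 2 * (1 + α - g) := by rw [abs_of_nonneg] <;> linarith
  rw [e1] at s1
  rw [e2] at s2
  rw [e4] at s4
  have hTp : 0 ≤ 1 - α + (2 * g - 1 - α) := by
    by_contra hc
    push Not at hc
    have e3 : |1 - α + (2 * g - 1 - α)| = 2 * (α - g) := by rw [abs_of_neg hc]; ring
    rw [e3] at s3
    have hgα : g < α := by linarith
    by_cases hX : 0 ≤ 1 - β + d
    · rw [abs_of_nonneg hX] at s1
      rw [abs_of_nonneg (by linarith : 0 ≤ 1 + β - d)] at s3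
      nlinarith
    · push Not at hX
      rw [abs_of_neg hX] at s1
      nlinarith
  refine ⟨?_, ?_, hTp, hTm⟩
  · by_contra hc
    push Not at hc
    rw [abs_of_neg hc] at s1
    rw [abs_of_nonneg (by linarith : 0 ≤ 1 + β + d)] at s2
    nlinarith
  · by_contra hc
    push Not at hc
    rw [abs_of_neg hc] at s4
    rw [abs_of_nonneg (by linarith : 0 ≤ 1 + β - d), abs_of_nonneg hTp] at s3
    nlinarith

/-- the key averaging inequality -/
theorem key_avg {a t α r p e T f β g ν : ℝ} (hα : 0 < α) (hβ : 0 < β) (hr : 0 ≤ r) (hp : 0 ≤ p)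
    (hν : 0 ≤ ν)
    (h1 : α * (a + r) = 1) (h2 : β * (a + p) = 1) (hT : T = α * (t + f)) (hg : g = β * (t - e))
    (s2 : ν * (1 + α * p) < (1 + p + e) * (1 - α - T))
    (s4 : ν * (1 + α * p) < (1 - p - e) * (1 + α - T))
    (s3' : ν * (1 + r * β) < (1 + β - g) * (1 - r + f))
    (s4' : ν * (1 + r * β) < (1 - β - g) * (1 + r - f)) : ν * a < a - t := by
  have ha : 0 < a + r := by
    by_contra hc
    push Not at hc
    nlinarith
  have hb : 0 < a + p := by
    by_contra hc
    push Not at hc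
    nlinarith
  have A1 := mul_lt_mul_of_pos_right (add_lt_add s2 s4) ha
  have A2 := mul_lt_mul_of_pos_right (add_lt_add s3' s4') hb
  have i1 : (ν * (1 + α * p) + ν * (1 + α * p)) * (a + r) = 2 * ν * (a + r + p) := by
    linear_combination 2 * ν * p * h1
  have i2 : ((1 + p + e) * (1 - α - T) + (1 - p - e) * (1 + α - T)) * (a + r)
      = 2 * (a + r - t - f - p - e) := by
    rw [hT]; linear_combination (-2 * (t + f) - 2 * (p + e)) * h1
  have i3 : (ν * (1 + r * β) + ν * (1 + r * β)) * (a + p) = 2 * ν * (a + r + p) := by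
    linear_combination 2 * ν * r * h2
  have i4 : ((1 + β - g) * (1 - r + f) + (1 - β - g) * (1 + r - f)) * (a + p)
      = 2 * (a + p - t + e - r + f) := by
    rw [hg]; linear_combination (-2 * (t - e) - 2 * (r - f)) * h2
  rw [i1, i2] at A1
  rw [i3, i4] at A2
  nlinarith [mul_nonneg hν hr, mul_nonneg hν hp]

/-! ### The conclusion for a general `γ` -/

theorem gamma_part {a c : ℕ → ℤ} {A g : ℕ → ℝ} (h : CFS a A)
    (hg0 : ∀ k, 0 ≤ g k) (hg1 : ∀ k, g k < 1) (hc0 : ∀ k, 0 ≤ c k) (hc1 : ∀ k, c k ≤ a k)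
    (hgc : ∀ k, g k = A k * ((c k : ℝ) + g (k + 1)))
    (hnl : ∀ n m : ℤ, (n : ℝ) * A 0 - g 0 ≠ m)
    (h4 : ∀ᶠ k in atTop, 4 ≤ a k) {N : ℝ} (hN : 5 ≤ N)
    (hM : (1 - 2 / (N - 1)) / 4 < Mval (A 0) (g 0)) :
    ∀ᶠ k in atTop, ((|2 * c k - a k| : ℤ) : ℝ) < 2 * (a k : ℝ) / (N - 1) := by
  set t : ℕ → ℤ := fun k => 2 * c k - a k with ht
  set T : ℕ → ℝ := fun k => 2 * g k - 1 - A k with hT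
  set ν : ℝ := 1 - 2 / (N - 1) with hν
  have hν2 : 1 / 2 ≤ ν := by
    have : 2 / (N - 1) ≤ 1 / 2 := by
      rw [div_le_div_iff₀ (by linarith) (by norm_num)]; linarith
    linarith
  have hTS : TS a t A T (g 0) := by
    refine ⟨fun k => ⟨a k - c k, by simp only [ht]; ring⟩, fun k => ?_, by simp only [hT]; ring⟩
    have e1 := hgc k
    have e2 := h.rel k
    simp only [hT, ht]
    push_cast
    linear_combination 2 * e1 + e2
  have hTB : ∀ k, |T k| ≤ 2 := by
    intro k
    have := A_half h k
    have := h.pos k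
    have := hg0 k
    have := hg1 k
    simp only [hT]
    rw [abs_le]
    constructor <;> linarith
  have hU := upper h hTS hnl hTB hM
  have hx : ∀ k, -(2 * zq a k) ≤ zq a (k + 1) - zq a k + ze a t k ∧
      zq a (k + 1) - zq a k + ze a t k ≤ 2 * zq a (k + 1) := by
    intro k
    induction k with
    | zero => simp [zq, ze]
    | succ k ih =>
      have e1 : zq a (k + 1 + 1) = (a k : ℝ) * zq a (k + 1) + zq a k := by rw [zq]
      have e2 : ze a t (k + 1) = (t k : ℝ) * zq a (k + 1) - ze a t k := by rw [ze]
      have hq := (zq_pos h k).2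
      have hck0 : (0 : ℝ) ≤ c k := by exact_mod_cast hc0 k
      have hck1 : (c k : ℝ) ≤ a k := by exact_mod_cast hc1 k
      have e3 : zq a (k + 1 + 1) - zq a (k + 1) + ze a t (k + 1) =
          2 * c k * zq a (k + 1) - (zq a (k + 1) - zq a k + ze a t k) := by
        rw [e1, e2]; simp only [ht]; push_cast; ring
      rw [e3, e1]
      have := mul_nonneg hck0 hq.le
      have := mul_le_mul_of_nonneg_right hck1 hq.le
      constructor <;> nlinarith [ih.1, ih.2]
  have hX : ∀ k, -(2 * zb a k) ≤ 1 - zb a k + zd a t k ∧ 1 - zb a k + zd a t k ≤ 2 := by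
    intro k
    have hq := (zq_pos h k).2
    have e : 1 - zb a k + zd a t k = (zq a (k + 1) - zq a k + ze a t k) / zq a (k + 1) := by
      unfold zb zd; field_simp
    have e' : -(2 * zb a k) = (-(2 * zq a k)) / zq a (k + 1) := by unfold zb; field_simp
    rw [e, e']
    refine ⟨div_le_div_of_nonneg_right (hx k).1 hq.le, ?_⟩
    rw [div_le_iff₀ hq]; exact (hx k).2
  have h4' : ∀ᶠ k in atTop, A k ≤ 1 / 4 ∧ zb a k ≤ 1 / 4 := by
    obtain ⟨K, hK⟩ := eventually_atTop.mp h4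
    refine eventually_atTop.mpr ⟨K + 1, fun k hk => ?_⟩
    obtain ⟨j, rfl⟩ : ∃ j, k = j + 1 := ⟨k - 1, by omega⟩
    have e1 : (4 : ℝ) ≤ a (j + 1) := by exact_mod_cast hK (j + 1) (by omega)
    have e2 : (4 : ℝ) ≤ a j := by exact_mod_cast hK j (by omega)
    have := A_le h _ e1
    have := zb_le h _ e2
    constructor <;> linarith
  -- the four inequalities, with all signs resolved
  have hall : ∀ᶠ k in atTop,
      ν * (1 + A k * zb a k) < (1 - zb a k + zd a t k) * (1 + A k + T k) ∧
      ν * (1 + A k * zb a k) < (1 + zb a k + zd a t k) * (1 - A k - T k) ∧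
      ν * (1 + A k * zb a k) < (1 + zb a k - zd a t k) * (1 - A k + T k) ∧
      ν * (1 + A k * zb a k) < (1 - zb a k - zd a t k) * (1 + A k - T k) := by
    filter_upwards [hU, h4'] with k hk hk4
    have s1 := hk (-1) (-1) (by simp) (by simp)
    have s2 := hk (-1) 1 (by simp) (by simp)
    have s3 := hk 1 (-1) (by simp) (by simp)
    have s4 := hk 1 1 (by simp) (by simp)
    push_cast at s1 s2 s3 s4
    rw [show (- -1 + zb a k * -1 + zd a t k : ℝ) = 1 - zb a k + zd a t k by ring,
      show (-1 + A k * -1 - T k : ℝ) = -(1 + A k + T k) by ring, abs_neg] at s1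
    rw [show (- -1 + zb a k * 1 + zd a t k : ℝ) = 1 + zb a k + zd a t k by ring,
      show (1 + A k * -1 - T k : ℝ) = (1 - A k - T k) by ring] at s2
    rw [show (-1 + zb a k * -1 + zd a t k : ℝ) = -(1 + zb a k - zd a t k) by ring,
      show (-1 + A k * 1 - T k : ℝ) = -(1 - A k + T k) by ring, abs_neg, abs_neg] at s3
    rw [show (-1 + zb a k * 1 + zd a t k : ℝ) = -(1 - zb a k - zd a t k) by ring,
      show (1 + A k * 1 - T k : ℝ) = (1 + A k - T k) by ring, abs_neg] at s4
    have hb := zb_nonneg h k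
    have hA := h.pos k
    obtain ⟨p1, p2, p3, p4⟩ := signs hA hk4.1 hb hk4.2 hν2 (rfl : T k = 2 * g k - 1 - A k)
      (hg0 k) (hg1 k) (hX k).1 (hX k).2 s1 s2 s3 s4
    rw [abs_of_nonneg p1, abs_of_nonneg (by linarith)] at s1
    rw [abs_of_nonneg (by linarith), abs_of_nonneg p4] at s2
    rw [abs_of_nonneg (by linarith), abs_of_nonneg p3] at s3
    rw [abs_of_nonneg p2, abs_of_nonneg (by linarith)] at s4
    exact ⟨s1, s2, s3, s4⟩
  have hall' := (tendsto_add_atTop_nat 1).eventually hall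
  filter_upwards [hall, hall'] with k hk hk'
  obtain ⟨s1, s2, s3, s4⟩ := hk
  obtain ⟨s1', s2', s3', s4'⟩ := hk'
  have hA := h.pos k
  have hA' := h.pos (k + 1)
  have hb := zb_nonneg h k
  have hb' := zb_pos h k
  have r1 := h.rel k
  have r2 := zb_rec h k
  have r3 := hTS.step k
  have r4 := zd_rec h t k
  have q1 : ν * a k < a k - t k :=
    key_avg hA hb' hA'.le hb (by linarith) r1 r2 r3 r4 s2 s4 s3' s4'
  have q2 : ν * a k < a k - (-(t k : ℝ)) :=
    key_avg (t := -(t k : ℝ)) (T := -T k) (f := -T (k + 1)) (e := -zd a t k) (g := -zd a t (k + 1))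
      hA hb' hA'.le hb (by linarith) r1 r2
      (by rw [r3]; ring) (by rw [r4]; ring) (by linarith) (by linarith) (by linarith) (by linarith)
  have q3 : (1 - ν) * a k = 2 * (a k : ℝ) / (N - 1) := by rw [hν]; ring
  rw [← q3]
  push_cast
  have e : (2 * (c k : ℝ) - a k) = t k := by simp only [ht]; push_cast; ring
  rw [e, abs_lt]
  constructor <;> linarith

/-! ### Lower bounds: reduction to the four corner points -/

theorem core {p u w a t α r β β' d d' T f ν : ℝ} (hp : 1 ≤ p) (hu : 1 ≤ u) (hw : 1 ≤ w)
    (hpw : p + w = a * u - t) (hα : 0 < α) (hβ' : 0 < β') (hr : 0 ≤ r) (hβ : 0 ≤ β)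
    (h1 : α * (a + r) = 1) (h2 : β' * (a + β) = 1) (hT : T = α * (t + f)) (hd' : d' = β' * (t - d))
    (n1 : 0 ≤ 1 + β + d) (n2 : 0 ≤ 1 - α - T) (n3 : 0 ≤ 1 - β' - d') (n4 : 0 ≤ 1 + r - f)
    (G1 : ν * (1 + α * β) ≤ (1 + β + d) * (1 - α - T))
    (G2 : ν * (1 + r * β') ≤ (1 - β' - d') * (1 + r - f)) :
    ν * (1 + α * β) ≤ (p + β * u + d) * (u - α * p - T) := by
  have F1 : ν * (1 + α * β) ≤ (1 + β * u + d) * (u - α - T) := by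
    refine G1.trans (mul_le_mul ?_ ?_ n2 ?_)
    · nlinarith
    · linarith
    · nlinarith
  have hab : 0 < a + β := by
    by_contra hc
    push Not at hc
    nlinarith
  have F2' : ν * (1 + r * β') ≤ (u - β' - d') * (1 + r * u - f) := by
    refine G2.trans (mul_le_mul ?_ ?_ n4 ?_)
    · linarith
    · nlinarith
    · linarith
  have F2 : ν * (1 + α * β) ≤ ((p + w - 1) + β * u + d) * (u - α * (p + w - 1) - T) := by
    have := mul_le_mul_of_nonneg_left F2' (mul_pos hα hab).le
    have i1 : α * (a + β) * (ν * (1 + r * β')) = ν * (1 + α * β) := by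
      linear_combination ν * α * r * h2 + ν * h1
    have i2 : α * (a + β) * ((u - β' - d') * (1 + r * u - f)) =
        ((p + w - 1) + β * u + d) * (u - α * (p + w - 1) - T) := by
      have j1 : (a + β) * (u - β' - d') = (p + w - 1) + β * u + d := by
        rw [hpw, hd']
        linear_combination (-1 - (t - d)) * h2
      have j2 : α * (1 + r * u - f) = u - α * (p + w - 1) - T := by
        rw [hpw, hT]
        linear_combination u * h1
      rw [← j1, ← j2]; ring
    rw [i1, i2] at this
    exact this
  have hq1 : 0 ≤ p - 1 := by linarith
  have hq2 : 0 ≤ w - 1 := by linarith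
  rcases eq_or_lt_of_le hq1 with hz | hz
  · have : p = 1 := by linarith
    subst this
    linarith
  · have hs : 0 < p - 1 + (w - 1) := by linarith
    have c1 := mul_le_mul_of_nonneg_left F1 hq2
    have c2 := mul_le_mul_of_nonneg_left F2 hq1
    have c3 : 0 ≤ α * (p - 1) * (w - 1) * (p - 1 + (w - 1)) := by positivity
    refine le_of_mul_le_mul_left ?_ hs
    nlinarith

/-- corner conditions at level `k` -/
structure Corner (a t : ℕ → ℤ) (A T : ℕ → ℝ) (ν : ℝ) (k : ℕ) (s : ℝ) : Prop where
  n1 : 0 ≤ 1 + zb a k + s * zd a t k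
  n2 : 0 ≤ 1 - A k - s * T k
  n3 : 0 ≤ 1 - zb a k - s * zd a t k
  n4 : 0 ≤ 1 + A k - s * T k
  G1 : ν * (1 + A k * zb a k) ≤ (1 + zb a k + s * zd a t k) * (1 - A k - s * T k)
  G2 : ν * (1 + A k * zb a k) ≤ (1 - zb a k - s * zd a t k) * (1 + A k - s * T k)

theorem lower {a t : ℕ → ℤ} {A T : ℕ → ℝ} {γ : ℝ} (h : CFS a A) (ht : TS a t A T γ)
    {K : ℕ} {ν : ℝ}
    (hC : ∀ k, K ≤ k → Corner a t A T ν k 1 ∧ Corner a t A T ν k (-1))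
    (ht1 : ∀ k, |t k| ≤ 1) (h4 : ∀ k, K ≤ k → 4 ≤ a k) :
    ∃ C : ℝ, ∀ n m : ℤ, C < |2 * (n : ℝ) - 1| → |2 * ((n : ℝ) * A 0 - γ - m)| ≤ 1 →
      ν ≤ |2 * (n : ℝ) - 1| * |2 * ((n : ℝ) * A 0 - γ - m)| := by
  set C1 : ℝ := |T K| + 1 / zD A K with hC1
  refine ⟨zq a (K + 1) * (C1 / A K) + zq a K * C1 + |ze a t K|, fun n m hn hy => ?_⟩
  obtain ⟨Z, hodd, hrec, hx, hyy⟩ := pt_all h ht n m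
  have hD := zD_pos h K
  have hA := h.pos K
  have hne : ∀ k, Z k ≠ 0 := by
    intro k hk
    have := hodd k
    rw [hk] at this
    simp at this
  have hC1' : |(Z (K + 1) : ℝ) + A K * Z K| ≤ C1 := by
    have e1 := hyy K
    rw [e1, abs_mul, abs_of_pos hD] at hy
    have : |(Z (K + 1) : ℝ) + A K * Z K - T K| ≤ 1 / zD A K := by
      rw [le_div_iff₀ hD]; linarith
    have e2 := abs_add_le ((Z (K + 1) : ℝ) + A K * Z K - T K) (T K)
    rw [sub_add_cancel] at e2
    linarith
  -- opposite signs at K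
  have hopp : Z K * Z (K + 1) < 0 := by
    by_contra hc
    push Not at hc
    have hcR : (0 : ℝ) ≤ (Z K : ℝ) * Z (K + 1) := by exact_mod_cast hc
    have habs : |(Z (K + 1) : ℝ) + A K * Z K| = |(Z (K + 1) : ℝ)| + A K * |(Z K : ℝ)| := by
      have : 0 ≤ (Z (K + 1) : ℝ) * (A K * Z K) := by nlinarith
      rw [abs_add_eq_add_abs_iff _ _ |>.mpr, abs_mul, abs_of_pos hA]
      rcases mul_nonneg_iff.mp this with hh | hh
      · exact Or.inl hh
      · exact Or.inr hh
    rw [habs] at hC1'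
    have p0 := abs_nonneg (Z (K + 1) : ℝ)
    have p1 := abs_nonneg (Z K : ℝ)
    have b1 : |(Z (K + 1) : ℝ)| ≤ C1 := by nlinarith
    have b2 : |(Z K : ℝ)| ≤ C1 / A K := by rw [le_div_iff₀ hA]; linarith
    have hb : |2 * (n : ℝ) - 1| ≤ zq a (K + 1) * (C1 / A K) + zq a K * C1 + |ze a t K| := by
      rw [hx K, abs_mul, abs_pow, abs_neg, abs_one, one_pow, one_mul]
      have hq := zq_pos h K
      calc |-zq a (K + 1) * (Z K : ℝ) + zq a K * (Z (K + 1) : ℝ) + ze a t K|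
          ≤ |-zq a (K + 1) * (Z K : ℝ)| + |zq a K * (Z (K + 1) : ℝ)| + |ze a t K| := abs_add_three _ _ _
        _ = zq a (K + 1) * |(Z K : ℝ)| + zq a K * |(Z (K + 1) : ℝ)| + |ze a t K| := by
          rw [abs_mul, abs_mul, abs_neg, abs_of_pos hq.2, abs_of_nonneg hq.1]
        _ ≤ _ := by
          have := hq.1
          have := hq.2
          gcongr
    linarith
  -- find turning point
  have hturn : ∀ B : ℕ, ∀ k, K ≤ k → (Z k).natAbs ≤ B → Z k * Z (k + 1) < 0 →
      ∃ j, K ≤ j ∧ Z j * Z (j + 1) < 0 ∧ 0 < Z (j + 1) * Z (j + 2) := by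
    intro B
    induction B with
    | zero =>
      intro k _ hB _
      exact absurd (Int.natAbs_eq_zero.mp (Nat.le_zero.mp hB)) (hne k)
    | succ B ih =>
      intro k hk hB hs
      by_cases hp : 0 < Z (k + 1) * Z (k + 2)
      · exact ⟨k, hk, hs, hp⟩
      · have hs' : Z (k + 1) * Z (k + 2) < 0 :=
          lt_of_le_of_ne (not_lt.mp hp) (mul_ne_zero (hne _) (hne _))
        refine ih (k + 1) (by omega) ?_ hs'
        have e := hrec k
        have ha := h4 k hk
        have htt := abs_le.mp (ht1 k)
        rcases lt_trichotomy (Z (k + 1)) 0 with hz | hz | hz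
        · have z1 : 0 < Z k := by nlinarith
          have z2 : 0 < Z (k + 2) := by nlinarith
          have : Z k > - Z (k + 1) := by nlinarith
          omega
        · exact absurd hz (hne _)
        · have z1 : Z k < 0 := by nlinarith
          have z2 : Z (k + 2) < 0 := by nlinarith
          have : - Z k > Z (k + 1) := by nlinarith
          omega
  obtain ⟨j, hj, hs1, hs2⟩ := hturn _ K le_rfl le_rfl hopp
  have hprod := prod_eq (T := T) h j _ _ _ _ (hx j) (hyy j)
  have hf : 0 < 1 + A j * zb a j := by
    have := mul_nonneg (h.pos j).le (zb_nonneg h j)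
    linarith
  refine le_of_mul_le_mul_right ?_ hf
  rw [hprod]
  have hA := h.pos j
  have hA' := h.pos (j + 1)
  have hb := zb_nonneg h j
  have hb' := zb_pos h j
  have r1 := h.rel j
  have r2 := zb_rec h j
  have r3 := ht.step j
  have r4 := zd_rec h t j
  have e : (Z (j + 2) : ℝ) = a j * Z (j + 1) + Z j - t j := by exact_mod_cast hrec j
  obtain ⟨c1, c2⟩ := hC j hj
  obtain ⟨c1', c2'⟩ := hC (j + 1) (by omega)
  rcases lt_trichotomy (Z (j + 1)) 0 with hz | hz | hz
  · have z1 : 0 < Z j := by nlinarith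
    have z2 : Z (j + 2) < 0 := by nlinarith
    have w1 : (1 : ℝ) ≤ Z j := by exact_mod_cast z1
    have w2 : (1 : ℝ) ≤ -Z (j + 1) := by
      have : 1 ≤ -Z (j + 1) := by omega
      exact_mod_cast this
    have w3 : (1 : ℝ) ≤ -Z (j + 2) := by
      have : 1 ≤ -Z (j + 2) := by omega
      exact_mod_cast this
    have := core (p := Z j) (u := -Z (j + 1)) (w := -Z (j + 2)) (t := -t j) (T := -1 * T j)
      (f := -1 * T (j + 1)) (d := -1 * zd a t j) (d' := -1 * zd a t (j + 1)) w1 w2 w3 (by linarith)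
      hA hb' hA'.le hb r1 r2 (by rw [r3]; ring) (by rw [r4]; ring) c2.n1 c2.n2 c2'.n3 c2'.n4
      c2.G1 c2'.G2
    refine this.trans ?_
    rw [← abs_mul]
    refine le_trans (le_of_eq ?_) (le_abs_self _)
    ring
  · exact absurd hz (hne _)
  · have z1 : Z j < 0 := by nlinarith
    have z2 : 0 < Z (j + 2) := by nlinarith
    have w1 : (1 : ℝ) ≤ -Z j := by
      have : 1 ≤ -Z j := by omega
      exact_mod_cast this
    have w2 : (1 : ℝ) ≤ Z (j + 1) := by exact_mod_cast hz
    have w3 : (1 : ℝ) ≤ Z (j + 2) := by exact_mod_cast z2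
    have := core (p := -Z j) (u := Z (j + 1)) (w := Z (j + 2)) (t := t j) (T := 1 * T j)
      (f := 1 * T (j + 1)) (d := 1 * zd a t j) (d' := 1 * zd a t (j + 1)) w1 w2 w3 (by linarith)
      hA hb' hA'.le hb r1 r2 (by rw [r3]; ring) (by rw [r4]; ring) c1.n1 c1.n2 c1'.n3 c1'.n4
      c1.G1 c1'.G2
    refine this.trans ?_
    rw [← abs_mul]
    refine le_trans (le_of_eq ?_) (le_abs_self _)
    ring

theorem Mval_lower {a t : ℕ → ℤ} {A T : ℕ → ℝ} {γ : ℝ} (h : CFS a A) (ht : TS a t A T γ)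
    {K : ℕ} {ν μ : ℝ} (hμ0 : 0 < μ) (hμ : μ < ν)
    (hC : ∀ k, K ≤ k → Corner a t A T ν k 1 ∧ Corner a t A T ν k (-1))
    (ht1 : ∀ k, |t k| ≤ 1) (h4 : ∀ k, K ≤ k → 4 ≤ a k) :
    μ / 4 ≤ Mval (A 0) γ := by
  obtain ⟨C, hCC⟩ := lower h ht hC ht1 h4
  refine Filter.le_liminf_of_le ?_ ?_
  · refine Filter.IsCoboundedUnder.of_frequently_le (a := 3) ?_
    rw [Filter.frequently_cofinite_iff_infinite]
    intro hfin
    obtain ⟨L, hL⟩ : ∃ L : ℝ, ∀ n : ℤ, |(n : ℝ)| * nint (n * A 0 - γ) ≤ 3 → |2 * (n : ℝ) - 1| ≤ L := by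
      obtain ⟨L, hL⟩ := (hfin.image (fun n : ℤ => |2 * (n : ℝ) - 1|)).bddAbove
      exact ⟨L, fun n hn => hL ⟨n, hn, rfl⟩⟩
    have hlim : Tendsto (fun k : ℕ => ((1 : ℝ) / 2) ^ k * 3 * (|L| + 1)) atTop
        (nhds (0 * 3 * (|L| + 1))) :=
      ((tendsto_pow_atTop_nhds_zero_of_lt_one (by norm_num) (by norm_num)).mul_const _).mul_const _
    rw [zero_mul, zero_mul] at hlim
    obtain ⟨k, hk, hkK⟩ := ((hlim.eventually (gt_mem_nhds (hμ0.trans hμ))).and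
      (eventually_ge_atTop K)).exists
    obtain ⟨n, m, h1, h2⟩ := pt_ex h ht k (-1) 1 (by decide) (by decide)
    have hprod := prod_eq (T := T) h k _ _ _ _ h1 h2
    obtain ⟨c1, c2⟩ := hC k hkK
    have hA := h.pos k
    have hA2 := A_half h k
    have hb := zb_nonneg h k
    have hD := zD_pos h k
    have n1 := c1.n1
    have n2 := c1.n2
    have n3 := c1.n3
    have n2' := c2.n2
    have n3' := c2.n3
    push_cast at hprod h2
    have X : |-(-1 : ℝ) + zb a k * 1 + zd a t k| = 1 + zb a k + 1 * zd a t k := by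
      rw [show -(-1 : ℝ) + zb a k * 1 + zd a t k = 1 + zb a k + 1 * zd a t k by ring,
        abs_of_nonneg n1]
    have Y : |(1 : ℝ) + A k * -1 - T k| = 1 - A k - 1 * T k := by
      rw [show (1 : ℝ) + A k * -1 - T k = 1 - A k - 1 * T k by ring, abs_of_nonneg n2]
    rw [X, Y] at hprod
    have hf : 1 ≤ 1 + A k * zb a k := by
      have := mul_nonneg (h.pos k).le (zb_nonneg h k)
      linarith
    have hlow : ν ≤ |2 * (n : ℝ) - 1| * |2 * ((n : ℝ) * A 0 - γ - m)| := by
      refine le_of_mul_le_mul_right ?_ (by linarith : 0 < 1 + A k * zb a k)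
      rw [hprod]; exact c1.G1
    have hy : |2 * ((n : ℝ) * A 0 - γ - m)| ≤ (1 / 2) ^ k * 3 := by
      rw [h2, abs_mul, abs_of_pos hD, Y]
      exact mul_le_mul (zD_le h k) (by linarith) n2 (by positivity)
    have hy3 : |2 * ((n : ℝ) * A 0 - γ - m)| ≤ 3 := by
      refine hy.trans ?_
      have : ((1 : ℝ) / 2) ^ k ≤ 1 := pow_le_one₀ (by norm_num) (by norm_num)
      linarith
    have hP : |2 * (n : ℝ) - 1| * |2 * ((n : ℝ) * A 0 - γ - m)| ≤ 9 := by
      have q1 : 1 + zb a k + 1 * zd a t k ≤ 3 := by linarith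
      have q2 : 1 - A k - 1 * T k ≤ 3 := by linarith
      have q3 := mul_nonneg (abs_nonneg (2 * (n : ℝ) - 1)) (abs_nonneg (2 * ((n : ℝ) * A 0 - γ - m)))
      nlinarith
    have hn1 : 2 * |(n : ℝ)| ≤ |2 * (n : ℝ) - 1| + 1 := by
      have : |2 * (n : ℝ)| ≤ |2 * (n : ℝ) - 1| + |(1 : ℝ)| := by
        have := abs_add_le (2 * (n : ℝ) - 1) 1
        simpa using this
      rw [abs_mul] at this
      norm_num at this
      exact this
    have hy2 : |2 * ((n : ℝ) * A 0 - γ - m)| = 2 * |(n : ℝ) * A 0 - γ - m| := by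
      rw [abs_mul]; norm_num
    have hni := nint_le ((n : ℝ) * A 0 - γ) m
    have e1 : |(n : ℝ)| * nint (n * A 0 - γ) ≤ |(n : ℝ)| * |(n : ℝ) * A 0 - γ - m| :=
      mul_le_mul_of_nonneg_left hni (abs_nonneg _)
    have e2 := mul_le_mul_of_nonneg_right hn1 (abs_nonneg (2 * ((n : ℝ) * A 0 - γ - m)))
    have hsmall := hL n (by
      rw [hy2] at e2 hP hy3
      nlinarith)
    have hLL := le_abs_self L
    have := mul_le_mul (hsmall.trans (by linarith : L ≤ |L| + 1)) hy (abs_nonneg _) (by positivity)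
    linarith
  · -- eventually
    have hr : 0 < ν / μ - 1 := by
      have : 1 < ν / μ := by rw [lt_div_iff₀ hμ0]; linarith
      linarith
    set L : ℝ := max C (ν / (ν - μ)) with hLdef
    have : ∀ᶠ n : ℤ in cofinite, L < |2 * (n : ℝ) - 1| := by
      rw [Filter.eventually_cofinite]
      refine (Set.finite_Icc (-(⌈L⌉ + 1)) (⌈L⌉ + 1)).subset ?_
      intro n hn
      simp only [Set.mem_ofPred_eq, not_lt] at hn
      have hc := Int.le_ceil L
      have h1 := abs_le.mp hn
      constructor
      · have : (-(⌈L⌉ + 1) : ℝ) ≤ n := by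
          have := h1.1
          have hL0 : 0 ≤ L := (abs_nonneg _).trans hn
          linarith
        exact_mod_cast this
      · have : (n : ℝ) ≤ ⌈L⌉ + 1 := by
          have := h1.2
          have hL0 : 0 ≤ L := (abs_nonneg _).trans hn
          linarith
        exact_mod_cast this
    filter_upwards [this] with n hn
    have hn1 := lt_of_le_of_lt (le_max_left _ _) hn
    have hn2 := lt_of_le_of_lt (le_max_right _ _) hn
    have hy2 : |2 * ((n : ℝ) * A 0 - γ - round ((n : ℝ) * A 0 - γ))| = 2 * nint (n * A 0 - γ) := by
      rw [abs_mul, nint]; norm_num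
    have hy1 : |2 * ((n : ℝ) * A 0 - γ - round ((n : ℝ) * A 0 - γ))| ≤ 1 := by
      rw [hy2, nint]
      linarith [abs_sub_round ((n : ℝ) * A 0 - γ)]
    have key := hCC n _ hn1 hy1
    rw [hy2] at key
    have hn3 : |2 * (n : ℝ) - 1| ≤ 2 * |(n : ℝ)| + 1 := by
      have := abs_sub (2 * (n : ℝ)) 1
      rw [abs_mul] at this
      norm_num at this
      exact this
    rw [div_lt_iff₀ (by linarith)] at hn2
    have h0 := nint_nonneg (n * A 0 - γ)
    -- μ * |2n-1| ≤ ν * (|2n-1| - 1) ≤ ν * 2|n|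
    have k1 : μ * |2 * (n : ℝ) - 1| ≤ ν * (2 * |(n : ℝ)|) := by nlinarith
    have hX : 0 < |2 * (n : ℝ) - 1| := by
      have : 0 < ν / (ν - μ) := div_pos (by linarith) (by linarith)
      have := lt_of_lt_of_le this (le_max_right C _)
      linarith
    have hν0 : 0 < ν := by linarith
    have k2 := mul_le_mul_of_nonneg_left key hμ0.le
    have k3 := mul_le_mul_of_nonneg_right k1 (by linarith : 0 ≤ 2 * nint (n * A 0 - γ))
    have k4 : ν * μ ≤ ν * (4 * (|(n : ℝ)| * nint (n * A 0 - γ))) := by nlinarith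
    have := le_of_mul_le_mul_left k4 hν0
    linarith

/-! ### Numerical inequalities for `γ_*` -/

set_option maxHeartbeats 1600000 in
theorem num_core {y w m α β V W Z : ℝ} (hy0 : 0 < y) (hy : y ≤ 1 / 5)
    (hw : w = y + 3 / 2 * y ^ 2 + 33 / 10 * y ^ 3)
    (hm : m = 1 - 2 * y - 2 * y ^ 2 + 21 / 10 * y ^ 3)
    (hα0 : 0 < α) (hβ0 : 0 < β) (hZ0 : 0 ≤ Z)
    (hf : (α ≤ y ∧ Z ≤ α) ∨ (α ≤ 5 / 4 * y ∧ Z ≤ α / 4))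
    (hV1 : -w ≤ V) (hV2 : V ≤ w)
    (hb : (β ≤ y ∧ W = β * (1 + V)) ∨ (β ≤ 5 / 4 * y ∧ W = -β * V)) :
    0 ≤ 1 - β + W ∧ 0 ≤ 1 - β - W ∧ 0 ≤ 1 - α + Z ∧ 0 ≤ 1 - α - Z ∧
    m * (1 + α * β) ≤ (1 + β - W) * (1 - α - Z) ∧
    m * (1 + α * β) ≤ (1 - β - W) * (1 + α + Z) ∧
    m * (1 + α * β) ≤ (1 + β + W) * (1 - α + Z) ∧
    m * (1 + α * β) ≤ (1 - β + W) * (1 + α - Z) := by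
  have y2 : 0 < y ^ 2 := by positivity
  have y3 : 0 < y ^ 3 := by positivity
  have y32 : y ^ 3 ≤ 1 / 5 * y ^ 2 := by nlinarith
  have y21 : y ^ 2 ≤ 1 / 5 * y := by nlinarith
  have hw1 : w ≤ 144 / 100 * y := by rw [hw]; nlinarith
  have hw0 : 0 < w := by rw [hw]; positivity
  have hm1 : m ≤ 1 - 2 * y - 158 / 100 * y ^ 2 := by rw [hm]; nlinarith
  have hm0 : 0 < m := by rw [hm]; nlinarith
  have hα : α ≤ 5 / 4 * y := by rcases hf with h | h <;> linarith [h.1]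
  have hβ : β ≤ 5 / 4 * y := by rcases hb with h | h <;> linarith [h.1]
  have hZ : Z ≤ α := by rcases hf with h | h <;> linarith [h.2]
  have bV1 : -(β * w) ≤ β * V := by nlinarith
  have bV2 : β * V ≤ β * w := by nlinarith
  have bw : β * w ≤ 3 / 10 * β := by nlinarith
  have hαβ : 0 < α * β := mul_pos hα0 hβ0
  have hαβ1 : α * β ≤ 25 / 16 * y ^ 2 := by nlinarith
  have hαβ2 : α * β ≤ 1 / 4 * β := by nlinarith
  have hαβ3 : α * β ≤ 1 / 4 * α := by nlinarith
  have bw2 : β * w ≤ 18 / 10 * y ^ 2 := by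
    calc β * w ≤ (5 / 4 * y) * (144 / 100 * y) := mul_le_mul hβ hw1 hw0.le (by positivity)
      _ = 18 / 10 * y ^ 2 := by ring
  have hb : (β ≤ y ∧ W = β + β * V) ∨ (β ≤ 5 / 4 * y ∧ W = -(β * V)) := by
    rcases hb with ⟨h1, h2⟩ | ⟨h1, h2⟩
    · left; exact ⟨h1, by rw [h2]; ring⟩
    · right; exact ⟨h1, by rw [h2]; ring⟩
  have mαβ : m * (1 + α * β) ≤ m + α * β := by
    have : m * (α * β) ≤ 1 * (α * β) := mul_le_mul_of_nonneg_right (by linarith) hαβ.le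
    linarith
  have hβw : β ≤ y → β * w ≤ y * w := fun h => mul_le_mul_of_nonneg_right h hw0.le
  have hyw : y * w ≤ 144 / 100 * y ^ 2 := by
    have := mul_le_mul_of_nonneg_left hw1 hy0.le
    linarith
  have X1 : 0 ≤ 1 - β + W := by
    rcases hb with ⟨_, h⟩ | ⟨_, h⟩ <;> rw [h] <;> linarith
  have X2 : 0 ≤ 1 - β - W := by
    rcases hb with ⟨_, h⟩ | ⟨_, h⟩ <;> rw [h] <;> linarith
  have Y1 : 0 ≤ 1 - α - Z := by linarith
  refine ⟨X1, X2, by linarith, Y1, ?_, ?_, ?_, ?_⟩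
  · -- F1
    rcases hb with ⟨hb1, hb2⟩ | ⟨hb1, hb2⟩
    · have hX : 1 - y * w ≤ 1 + β - W := by rw [hb2]; linarith [hβw hb1]
      have hX0 : 0 ≤ 1 - y * w := by linarith
      rcases hf with ⟨hf1, hf2⟩ | ⟨hf1, hf2⟩
      · have hY : 1 - 2 * y ≤ 1 - α - Z := by linarith
        have h1 : α * β ≤ y ^ 2 := by nlinarith
        calc m * (1 + α * β) ≤ m * (1 + y ^ 2) := by gcongr
          _ ≤ (1 - y * w) * (1 - 2 * y) := by
            rw [hm, hw]
            have y4 : 0 < y ^ 4 := by positivity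
            have y5 : 0 < y ^ 5 := by positivity
            nlinarith
          _ ≤ _ := mul_le_mul hX hY (by linarith) (by linarith)
      · have hY : 1 - 25 / 16 * y ≤ 1 - α - Z := by linarith
        have h1 : α * β ≤ 5 / 4 * y ^ 2 := by nlinarith
        calc m * (1 + α * β) ≤ m + α * β := mαβ
          _ ≤ 1 - 2 * y - 158 / 100 * y ^ 2 + 5 / 4 * y ^ 2 := by linarith
          _ ≤ (1 - 144 / 100 * y ^ 2) * (1 - 25 / 16 * y) := by nlinarith
          _ ≤ (1 - y * w) * (1 - 25 / 16 * y) := by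
            apply mul_le_mul_of_nonneg_right <;> linarith
          _ ≤ _ := mul_le_mul hX hY (by linarith) (by linarith)
    · have hX : 1 + α * β ≤ 1 + β - W := by rw [hb2]; linarith
      have hY : m ≤ 1 - α - Z := by
        rcases hf with ⟨hf1, hf2⟩ | ⟨hf1, hf2⟩ <;> linarith
      rw [mul_comm m]
      exact mul_le_mul hX hY hm0.le (by linarith)
  · -- F2
    have hY : 1 + α * β ≤ 1 + α + Z := by linarith
    have hX : m ≤ 1 - β - W := by
      rcases hb with ⟨hb1, hb2⟩ | ⟨hb1, hb2⟩
      · rw [hb2]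
        linarith [hβw hb1]
      · rw [hb2]; linarith
    exact mul_le_mul hX hY (by linarith) X2
  · -- F3
    have hX : 1 + α * β ≤ 1 + β + W := by
      rcases hb with ⟨hb1, hb2⟩ | ⟨hb1, hb2⟩ <;> rw [hb2] <;> linarith
    have hY : m ≤ 1 - α + Z := by linarith
    rw [mul_comm m]
    exact mul_le_mul hX hY hm0.le (by linarith)
  · -- F4
    have hY : 1 ≤ 1 + α - Z := by linarith
    have hX : m * (1 + α * β) ≤ 1 - β + W := by
      rcases hb with ⟨hb1, hb2⟩ | ⟨hb1, hb2⟩ <;> rw [hb2] <;> linarith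
    have := mul_le_mul_of_nonneg_left hY X1
    linarith

theorem num_const {N : ℝ} (hN : 5 ≤ N) :
    1 - 2 / (N - 1) + 4 / N ^ 3 <
      1 - 2 * (1 / N) - 2 * (1 / N) ^ 2 + 21 / 10 * (1 / N) ^ 3 := by
  have h1 : 0 < N - 1 := by linarith
  have h0 : 0 < N := by linarith
  rw [← sub_pos]
  have : 1 - 2 * (1 / N) - 2 * (1 / N) ^ 2 + 21 / 10 * (1 / N) ^ 3 -
      (1 - 2 / (N - 1) + 4 / N ^ 3) = (N + 19) / (10 * N ^ 3 * (N - 1)) := by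
    field_simp
    ring
  rw [this]
  positivity

/-! ### The lower bound for `γ_*` -/

theorem star_Z {a : ℕ → ℤ} {A Z : ℕ → ℝ} (h : CFS a A)
    (hZ : ∀ k, Z k = A k * (1 - Z (k + 1)) ∨ Z k = A k * Z (k + 1))
    {B : ℝ} (hB : ∀ k, |Z k| ≤ B) (k : ℕ) : 0 ≤ Z k ∧ Z k ≤ 1 := by
  have hB0 : 0 ≤ B := (abs_nonneg _).trans (hB 0)
  have key : ∀ n : ℕ, ∀ k, -(B * (1 / 2) ^ n) ≤ Z k ∧ Z k ≤ 1 + B * (1 / 2) ^ n := by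
    intro n
    induction n with
    | zero =>
      intro k
      have := abs_le.1 (hB k)
      simp only [pow_zero, mul_one]
      exact ⟨this.1, by linarith [this.2]⟩
    | succ n ih =>
      intro k
      obtain ⟨i1, i2⟩ := ih (k + 1)
      have hp : 0 ≤ B * (1 / 2) ^ n := by positivity
      have hs : B * (1 / 2) ^ (n + 1) = B * (1 / 2) ^ n / 2 := by rw [pow_succ]; ring
      rw [hs]
      set b := B * (1 / 2) ^ n
      have hA := A_half h k
      have hA0 := h.pos k
      have gen : ∀ x : ℝ, -b ≤ x → x ≤ 1 + b → -(b / 2) ≤ A k * x ∧ A k * x ≤ 1 + b / 2 := by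
        intro x h1 h2
        have e1 := mul_le_mul_of_nonneg_left h1 hA0.le
        have e2 := mul_le_mul_of_nonneg_left h2 hA0.le
        have e3 := mul_le_mul_of_nonneg_right hA hp
        constructor <;> linarith
      rcases hZ k with e | e
      · rw [e]; exact gen _ (by linarith) (by linarith)
      · rw [e]; exact gen _ i1 i2
  have lim : Tendsto (fun n : ℕ => B * (1 / 2 : ℝ) ^ n) atTop (nhds 0) := by
    have := (tendsto_pow_atTop_nhds_zero_of_lt_one (r := (1 / 2 : ℝ)) (by norm_num)
      (by norm_num)).const_mul B
    simpa using this
  constructor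
  · have := ge_of_tendsto' lim (fun n => (show -Z k ≤ _ by linarith [(key n k).1]))
    linarith
  · have := ge_of_tendsto' lim (fun n => (show Z k - 1 ≤ _ by linarith [(key n k).2]))
    linarith

theorem star_W {b W : ℕ → ℝ} {u y w : ℝ} {K : ℕ} (hu0 : 0 < u) (hu : u ≤ 1 / 4)
    (hyu : y * (1 + u) = u) (hw : u < w)
    (hb0 : ∀ k, 0 ≤ b k)
    (hW : ∀ k, K ≤ k → (b k ≤ y ∧ W (k + 1) = b k * (1 + W k)) ∨
      (b k ≤ u ∧ W (k + 1) = -b k * W k)) :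
    ∀ᶠ k in atTop, |W k| ≤ w := by
  have hy0 : 0 < y := by
    by_contra hc
    have : y * (1 + u) ≤ 0 := mul_nonpos_of_nonpos_of_nonneg (by linarith) (by linarith)
    linarith
  have hy1 : y ≤ 1 / 4 := by nlinarith
  have key : ∀ n : ℕ, |W (K + n)| ≤ u + |W K| * (1 / 4) ^ n := by
    intro n
    induction n with
    | zero => simp; linarith
    | succ n ih =>
      have hp : 0 ≤ |W K| * (1 / 4) ^ n := by positivity
      have hs : |W K| * (1 / 4) ^ (n + 1) = |W K| * (1 / 4) ^ n / 4 := by rw [pow_succ]; ring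
      rw [hs]
      set c := |W K| * (1 / 4) ^ n
      have hx := abs_nonneg (W (K + n))
      rcases hW (K + n) (by omega) with ⟨e1, e2⟩ | ⟨e1, e2⟩
      · rw [← add_assoc, e2, abs_mul, abs_of_nonneg (hb0 _)]
        have : |1 + W (K + n)| ≤ 1 + (u + c) := by
          calc |1 + W (K + n)| ≤ |(1 : ℝ)| + |W (K + n)| := abs_add_le _ _
            _ ≤ _ := by rw [abs_one]; linarith
        calc b (K + n) * |1 + W (K + n)| ≤ y * (1 + (u + c)) :=
              mul_le_mul e1 this (abs_nonneg _) hy0.le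
          _ ≤ _ := by nlinarith
      · rw [← add_assoc, e2, abs_mul, abs_neg, abs_of_nonneg (hb0 _)]
        calc b (K + n) * |W (K + n)| ≤ u * (u + c) :=
              mul_le_mul e1 ih (abs_nonneg _) hu0.le
          _ ≤ _ := by nlinarith
  have lim : Tendsto (fun n : ℕ => u + |W K| * (1 / 4 : ℝ) ^ n) atTop (nhds u) := by
    have := ((tendsto_pow_atTop_nhds_zero_of_lt_one (r := (1 / 4 : ℝ)) (by norm_num)
      (by norm_num)).const_mul |W K|).const_add u
    simpa using this
  obtain ⟨n0, hn0⟩ := eventually_atTop.1 (lim.eventually (gt_mem_nhds hw))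
  refine eventually_atTop.2 ⟨K + n0, fun k hk => ?_⟩
  have h1 := key (k - K)
  rw [show K + (k - K) = k by omega] at h1
  exact h1.trans (hn0 (k - K) (by omega)).le

theorem num_w {N : ℝ} (hN : 5 ≤ N) :
    1 / (N - 1) < 1 / N + 3 / 2 * (1 / N) ^ 2 + 33 / 10 * (1 / N) ^ 3 := by
  have h1 : 0 < N - 1 := by linarith
  have h0 : 0 < N := by linarith
  rw [← sub_pos]
  have : 1 / N + 3 / 2 * (1 / N) ^ 2 + 33 / 10 * (1 / N) ^ 3 - 1 / (N - 1)
      = (5 * N ^ 2 + 18 * N - 33) / (10 * N ^ 3 * (N - 1)) := by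
    field_simp
    ring
  rw [this]
  have : 0 < 5 * N ^ 2 + 18 * N - 33 := by nlinarith
  positivity

theorem star_lower {a t σ : ℕ → ℤ} {A T : ℕ → ℝ} {γ : ℝ} (h : CFS a A) (ht : TS a t A T γ)
    (hσ : ∀ k, σ k = 1 ∨ σ k = -1)
    (ho : ∀ k, Odd (a k) → t k = -σ k ∧ σ (k + 1) = -σ k)
    (he : ∀ k, Even (a k) → t k = 0 ∧ σ (k + 1) = σ k)
    {B : ℝ} (hT : ∀ k, |T k| ≤ B) {N : ℝ} (hN : 5 ≤ N)
    (hbd : ∀ᶠ k in atTop, (Odd (a k) → N ≤ a k) ∧ N - 1 ≤ a k) :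
    (1 - 2 / (N - 1)) / 4 + 1 / N ^ 3 ≤ Mval (A 0) γ := by
  have hN0 : 0 < N := by linarith
  have hN1 : 0 < N - 1 := by linarith
  have hσσ : ∀ k, (σ k : ℝ) * σ k = 1 := by
    intro k; rcases hσ k with e | e <;> rw [e] <;> norm_num
  have hZo : ∀ k, Odd (a k) → -(σ k : ℝ) * T k = A k * (1 - -(σ (k + 1) : ℝ) * T (k + 1)) := by
    intro k hk
    obtain ⟨e1, e2⟩ := ho k hk
    rw [ht.step k, e1, e2]
    push_cast
    linear_combination A k * hσσ k
  have hZe : ∀ k, Even (a k) → -(σ k : ℝ) * T k = A k * (-(σ (k + 1) : ℝ) * T (k + 1)) := by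
    intro k hk
    obtain ⟨e1, e2⟩ := he k hk
    rw [ht.step k, e1, e2]
    push_cast
    ring
  have hWo : ∀ k, Odd (a k) →
      (σ (k + 1) : ℝ) * zd a t (k + 1) = zb a (k + 1) * (1 + (σ k : ℝ) * zd a t k) := by
    intro k hk
    obtain ⟨e1, e2⟩ := ho k hk
    rw [zd_rec h, e1, e2]
    push_cast
    linear_combination zb a (k + 1) * hσσ k
  have hWe : ∀ k, Even (a k) →
      (σ (k + 1) : ℝ) * zd a t (k + 1) = -zb a (k + 1) * ((σ k : ℝ) * zd a t k) := by
    intro k hk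
    obtain ⟨e1, e2⟩ := he k hk
    rw [zd_rec h, e1, e2]
    push_cast
    ring
  obtain ⟨Z, hZ⟩ : ∃ Z : ℕ → ℝ, ∀ k, Z k = -(σ k : ℝ) * T k := ⟨_, fun _ => rfl⟩
  obtain ⟨W, hW⟩ : ∃ W : ℕ → ℝ, ∀ k, W k = (σ k : ℝ) * zd a t k := ⟨_, fun _ => rfl⟩
  simp only [← hZ] at hZo hZe
  simp only [← hW] at hWo hWe
  have hZ01 : ∀ k, 0 ≤ Z k ∧ Z k ≤ 1 := by
    refine star_Z h (fun k => ?_) (B := B) (fun k => ?_)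
    · rcases Int.even_or_odd (a k) with e | e
      · right; exact hZe k e
      · left; exact hZo k e
    · rw [hZ, abs_mul, abs_neg]
      rcases hσ k with e | e <;> rw [e] <;> simpa using hT k
  have hZA : ∀ k, Z k ≤ A k := by
    intro k
    have h1 := hZ01 (k + 1)
    have h2 := h.pos k
    rcases Int.even_or_odd (a k) with e | e
    · rw [hZe k e]; nlinarith
    · rw [hZo k e]; nlinarith
  obtain ⟨K, hK⟩ := eventually_atTop.1 hbd
  have hyu : 1 / N * (1 + 1 / (N - 1)) = 1 / (N - 1) := by field_simp; ring
  have hu4 : 1 / (N - 1) ≤ 1 / 4 := by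
    apply one_div_le_one_div_of_le <;> linarith
  have huy : 1 / (N - 1) ≤ 5 / 4 * (1 / N) := by
    have : (0 : ℝ) < 1 / N := by positivity
    nlinarith
  have hbo : ∀ k, K ≤ k → Odd (a k) → zb a (k + 1) ≤ 1 / N := by
    intro k hk e
    rw [le_div_iff₀ hN0]
    exact zb_le h k ((hK k hk).1 e)
  have hbe : ∀ k, K ≤ k → zb a (k + 1) ≤ 1 / (N - 1) := by
    intro k hk
    rw [le_div_iff₀ hN1]
    exact zb_le h k (hK k hk).2
  have hAo : ∀ k, K ≤ k → Odd (a k) → A k ≤ 1 / N := by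
    intro k hk e
    rw [le_div_iff₀ hN0]
    exact A_le h k ((hK k hk).1 e)
  have hAe : ∀ k, K ≤ k → A k ≤ 1 / (N - 1) := by
    intro k hk
    rw [le_div_iff₀ hN1]
    exact A_le h k (hK k hk).2
  have hWev := star_W (b := fun k => zb a (k + 1)) (W := W) (u := 1 / (N - 1)) (y := 1 / N)
    (K := K) (by positivity) hu4 hyu (num_w hN) (fun k => (zb_pos h k).le) (fun k hk => by
      rcases Int.even_or_odd (a k) with e | e
      · right; exact ⟨hbe k hk, hWe k e⟩
      · left; exact ⟨hbo k hk e, hWo k e⟩)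
  obtain ⟨K', hK'⟩ := eventually_atTop.1 hWev
  have hlow := Mval_lower h ht (μ := 1 - 2 / (N - 1) + 4 / N ^ 3)
    (ν := 1 - 2 * (1 / N) - 2 * (1 / N) ^ 2 + 21 / 10 * (1 / N) ^ 3) (K := K + K' + 1)
    (by
      have : 2 / (N - 1) ≤ 1 / 2 := by
        rw [div_le_iff₀ hN1]; linarith
      have : (0 : ℝ) < 4 / N ^ 3 := by positivity
      linarith) (num_const hN) ?_ ?_ ?_
  · have : (1 - 2 / (N - 1) + 4 / N ^ 3) / 4 = (1 - 2 / (N - 1)) / 4 + 1 / N ^ 3 := by ring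
    rw [← this]; exact hlow
  · intro k hk
    obtain ⟨k, rfl⟩ : ∃ j, k = j + 1 := ⟨k - 1, by omega⟩
    have hWk := abs_le.1 (hK' k (by omega))
    have hA4 : A (k + 1 + 1) ≤ 1 / 4 := (hAe (k + 1 + 1) (by omega)).trans hu4
    have nc := num_core (y := 1 / N) (α := A (k + 1)) (β := zb a (k + 1)) (V := W k)
      (W := W (k + 1)) (Z := Z (k + 1)) (by positivity)
      (by apply one_div_le_one_div_of_le <;> linarith) rfl rfl (h.pos _) (zb_pos h k)
      (hZ01 _).1 (by
        rcases Int.even_or_odd (a (k + 1)) with e | e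
        · right
          refine ⟨(hAe (k + 1) (by omega)).trans huy, ?_⟩
          rw [hZe _ e]
          have := mul_le_mul_of_nonneg_left ((hZA (k + 1 + 1)).trans hA4) (h.pos (k + 1)).le
          linarith
        · left; exact ⟨hAo (k + 1) (by omega) e, hZA _⟩) hWk.1 hWk.2 (by
        rcases Int.even_or_odd (a k) with e | e
        · right; exact ⟨(hbe k (by omega)).trans huy, hWe k e⟩
        · left; exact ⟨hbo k (by omega) e, hWo k e⟩)
    obtain ⟨x1, x2, z1, z2, F1, F2, F3, F4⟩ := nc
    have hβ := (zb_pos h k).le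
    have hα := (h.pos (k + 1)).le
    have eZ := hZ (k + 1)
    have eW := hW (k + 1)
    have C1 : ∀ s : ℝ, s * zd a t (k + 1) = W (k + 1) → s * T (k + 1) = -Z (k + 1) →
        Corner a t A T (1 - 2 * (1 / N) - 2 * (1 / N) ^ 2 + 21 / 10 * (1 / N) ^ 3) (k + 1) s := by
      intro s e1 e2
      refine ⟨?_, ?_, ?_, ?_, ?_, ?_⟩ <;> (try rw [e1]) <;> (try rw [e2]) <;> linarith
    have C2 : ∀ s : ℝ, s * zd a t (k + 1) = -W (k + 1) → s * T (k + 1) = Z (k + 1) →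
        Corner a t A T (1 - 2 * (1 / N) - 2 * (1 / N) ^ 2 + 21 / 10 * (1 / N) ^ 3) (k + 1) s := by
      intro s e1 e2
      refine ⟨?_, ?_, ?_, ?_, ?_, ?_⟩ <;> (try rw [e1]) <;> (try rw [e2]) <;> linarith
    rcases hσ (k + 1) with e | e <;> rw [e] at eZ eW <;> push_cast at eZ eW
    · exact ⟨C1 1 (by linarith) (by linarith), C2 (-1) (by linarith) (by linarith)⟩
    · exact ⟨C2 1 (by linarith) (by linarith), C1 (-1) (by linarith) (by linarith)⟩
  · intro k
    rcases Int.even_or_odd (a k) with e | e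
    · rw [(he k e).1]; norm_num
    · rw [(ho k e).1]; rcases hσ k with e | e <;> rw [e] <;> norm_num
  · intro k hk
    have := (hK k (by omega)).2
    have : (4 : ℝ) ≤ a k := by linarith
    exact_mod_cast this

/-! ### The NICF as a continued fraction system -/

theorem nicf_good {α : ℝ} (hirr : Irrational α) (h0 : 0 < α) (h12 : α < 1 / 2)
    (heps : ∀ i, nicfE α i = 1) :
    ∀ k, Irrational (nicfT α k) ∧ 0 < nicfT α k ∧ nicfT α k < 1 / 2 ∧
      nicfA α (k + 1) = ⌊(nicfT α k)⁻¹⌋ ∧ nicfT α (k + 1) = Int.fract (nicfT α k)⁻¹ := by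
  have hfr : ∀ k, Int.fract (nicfT α k)⁻¹ ≤ 1 / 2 := by
    intro k
    by_contra hc
    have := heps (k + 2)
    rw [nicfE, if_neg hc] at this
    omega
  have hstep : ∀ k, nicfA α (k + 1) = ⌊(nicfT α k)⁻¹⌋ ∧
      nicfT α (k + 1) = Int.fract (nicfT α k)⁻¹ := by
    intro k
    constructor
    · rw [nicfA, if_pos (hfr k)]
    · rw [nicfT, if_pos (hfr k)]
  have hmain : ∀ k, Irrational (nicfT α k) ∧ 0 < nicfT α k ∧ nicfT α k < 1 / 2 := by
    intro k
    induction k with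
    | zero => exact ⟨hirr, h0, h12⟩
    | succ k ih =>
      have hi : Irrational (nicfT α (k + 1)) := by
        rw [(hstep k).2, Int.fract]
        exact (irrational_inv_iff.2 ih.1).sub_intCast _
      refine ⟨hi, ?_, ?_⟩
      · have h1 : 0 ≤ nicfT α (k + 1) := by rw [(hstep k).2]; exact Int.fract_nonneg _
        exact lt_of_le_of_ne h1 (fun e => hi ⟨0, by simpa using e⟩)
      · have h1 : nicfT α (k + 1) ≤ 1 / 2 := by rw [(hstep k).2]; exact hfr k
        exact lt_of_le_of_ne h1 (fun e => hi ⟨1 / 2, by rw [e]; norm_num⟩)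
  intro k
  exact ⟨(hmain k).1, (hmain k).2.1, (hmain k).2.2, (hstep k).1, (hstep k).2⟩

theorem nicf_CFS {α : ℝ} (hirr : Irrational α) (h0 : 0 < α) (h12 : α < 1 / 2)
    (heps : ∀ i, nicfE α i = 1) : CFS (fun k => nicfA α (k + 1)) (nicfT α) := by
  have hg := nicf_good hirr h0 h12 heps
  refine ⟨fun k => ?_, fun k => (hg k).2.1, fun k => ?_⟩
  · obtain ⟨_, h1, h2, h3, _⟩ := hg k
    show 2 ≤ nicfA α (k + 1)
    rw [h3, Int.le_floor]
    push_cast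
    rw [le_inv_comm₀ (by norm_num) h1]
    linarith
  · obtain ⟨_, h1, h2, h3, h4⟩ := hg k
    show nicfT α k * ((nicfA α (k + 1) : ℝ) + nicfT α (k + 1)) = 1
    rw [h3, h4, Int.floor_add_fract, mul_inv_cancel₀ h1.ne']

theorem nicfD_eq (α : ℝ) (n : ℕ) : nicfD α n = zD (nicfT α) n := by
  induction n with
  | zero => simp [nicfD, zD]
  | succ n ih =>
    rw [zD, ← ih, nicfD, nicfD, Finset.prod_range_succ]

theorem oddIdx_succ (α : ℝ) (k : ℕ) :
    oddIdx α (k + 1) = oddIdx α k + if Odd (nicfA α (k + 1)) then 1 else 0 := by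
  unfold oddIdx
  have : Finset.Icc 1 (k + 1) = insert (k + 1) (Finset.Icc 1 k) := by
    ext x; simp only [Finset.mem_Icc, Finset.mem_insert]; omega
  rw [this, Finset.filter_insert]
  split_ifs with h
  · rw [Finset.card_insert_of_notMem]
    simp
  · simp

theorem lam_abs (α : ℝ) (i : ℕ) : |(lamStar α i : ℝ)| ≤ 1 := by
  unfold lamStar
  split_ifs
  · push_cast
    rw [abs_pow]; simp
  · simp

theorem star_Mval {α : ℝ} (hirr : Irrational α) (h0 : 0 < α) (h12 : α < 1 / 2)
    (heps : ∀ i, nicfE α i = 1) {N : ℝ} (hN : 5 ≤ N)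
    (hbd : ∀ᶠ k in atTop, (Odd (nicfA α (k + 1)) → N ≤ nicfA α (k + 1)) ∧
      N - 1 ≤ nicfA α (k + 1)) :
    (1 - 2 / (N - 1)) / 4 + 1 / N ^ 3 ≤ Mval α (gammaStar α) := by
  have h := nicf_CFS hirr h0 h12 heps
  set D := zD (nicfT α) with hD
  have Dpos : ∀ k, 0 < D k := zD_pos h
  have Dle : ∀ k, D k ≤ (1 / 2) ^ k := zD_le h
  have Dsucc : ∀ k, D (k + 1) = D k * nicfT α k := fun k => by rw [hD, zD]
  have Dadd : ∀ k n, D (k + n) ≤ D k * (1 / 2) ^ n := by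
    intro k n
    induction n with
    | zero => simp
    | succ n ih =>
      rw [← add_assoc, Dsucc, pow_succ, ← mul_assoc]
      exact mul_le_mul ih (A_half h _) (h.pos _).le
        (mul_nonneg (Dpos _).le (by positivity))
  have geo : Summable (fun n : ℕ => (1 / 2 : ℝ) ^ n) :=
    summable_geometric_of_lt_one (by norm_num) (by norm_num)
  have lamD : ∀ i m, |(lamStar α i : ℝ) * D m| ≤ D m := by
    intro i m
    rw [abs_mul, abs_of_pos (Dpos m)]
    exact mul_le_of_le_one_left (Dpos m).le (lam_abs α i)
  have bnd : ∀ k j, ‖(lamStar α (k + 1 + j) : ℝ) * D (k + 1 + j)‖ ≤ D k * (1 / 2) ^ j := by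
    intro k j
    rw [Real.norm_eq_abs]
    refine (lamD _ _).trans ?_
    have h1 := Dadd k (1 + j)
    rw [← add_assoc] at h1
    refine h1.trans ?_
    apply mul_le_mul_of_nonneg_left _ (Dpos k).le
    rw [pow_add]
    have : (0 : ℝ) < (1 / 2) ^ j := by positivity
    linarith
  have sm : ∀ k, Summable (fun j : ℕ => (lamStar α (k + 1 + j) : ℝ) * D (k + 1 + j)) := by
    intro k
    exact Summable.of_norm_bounded (geo.mul_left (D k)) (bnd k)
  -- the tails
  have Trec : ∀ k, (∑' j : ℕ, (lamStar α (k + 1 + j) : ℝ) * D (k + 1 + j)) =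
      (lamStar α (k + 1) : ℝ) * D (k + 1) +
        ∑' j : ℕ, (lamStar α (k + 1 + 1 + j) : ℝ) * D (k + 1 + 1 + j) := by
    intro k
    rw [(sm k).tsum_eq_zero_add]
    congr 1
    apply tsum_congr
    intro j
    rw [show k + 1 + (j + 1) = k + 1 + 1 + j by omega]
  have Tbd : ∀ k, |(∑' j : ℕ, (lamStar α (k + 1 + j) : ℝ) * D (k + 1 + j)) / D k| ≤ 2 := by
    intro k
    rw [abs_div, abs_of_pos (Dpos k), div_le_iff₀ (Dpos k), ← Real.norm_eq_abs]
    have hs : HasSum (fun j : ℕ => D k * (1 / 2 : ℝ) ^ j) (D k * 2) := by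
      have := (hasSum_geometric_of_lt_one (r := (1 / 2 : ℝ)) (by norm_num)
        (by norm_num)).mul_left (D k)
      norm_num at this ⊢
      exact this
    have := tsum_of_norm_bounded hs (bnd k)
    linarith
  -- the telescoping sum
  have tel : HasSum (fun k : ℕ => (nicfA α (k + 1) : ℝ) * D (k + 1)) (1 + α) := by
    have hrel : ∀ k, (nicfA α (k + 1) : ℝ) * D (k + 1) = D k - D (k + 2) := by
      intro k
      have h1 := h.rel k
      have h2 : D (k + 2) = D (k + 1) * nicfT α (k + 1) := Dsucc (k + 1)
      rw [h2, Dsucc k]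
      linear_combination D k * h1
    rw [hasSum_iff_tendsto_nat_of_nonneg]
    · have hsum : ∀ n : ℕ, ∑ k ∈ Finset.range n, (nicfA α (k + 1) : ℝ) * D (k + 1) =
          1 + α - (D n + D (n + 1)) := by
        intro n
        induction n with
        | zero =>
          have e0 : D 0 = 1 := by rw [hD, zD]
          have e1 : D 1 = α := by rw [Dsucc 0, e0]; simp [nicfT]
          simp [e0, e1]
        | succ n ih =>
          rw [Finset.sum_range_succ, ih, hrel]
          ring
      have lim0 : Tendsto D atTop (nhds 0) :=
        squeeze_zero (fun k => (Dpos k).le) Dle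
          (tendsto_pow_atTop_nhds_zero_of_lt_one (by norm_num) (by norm_num))
      have lim1 := (tendsto_const_nhds (x := 1 + α)).sub
        (lim0.add ((tendsto_add_atTop_iff_nat 1).2 lim0))
      simp only [add_zero, sub_zero] at lim1
      exact lim1.congr (fun n => (hsum n).symm)
    · intro k
      have h2 : (2 : ℝ) ≤ nicfA α (k + 1) := by exact_mod_cast h.two k
      exact mul_nonneg (by linarith) (Dpos _).le
  have hgam : 2 * gammaStar α = 1 + α + ∑' j : ℕ, (lamStar α (0 + 1 + j) : ℝ) * D (0 + 1 + j) := by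
    have hs := ((tel.add (sm 0).hasSum).mul_left (1 / 2)).tsum_eq
    have : gammaStar α = ∑' k : ℕ, 1 / 2 * ((nicfA α (k + 1) : ℝ) * D (k + 1) +
        (lamStar α (0 + 1 + k) : ℝ) * D (0 + 1 + k)) := by
      unfold gammaStar
      apply tsum_congr
      intro k
      rw [nicfD_eq, heps, show 0 + 1 + k = k + 1 by omega]
      push_cast
      ring
    rw [this, hs]
    ring
  have hTS : TS (fun k => nicfA α (k + 1)) (fun k => lamStar α (k + 1)) (nicfT α)
      (fun k => (∑' j : ℕ, (lamStar α (k + 1 + j) : ℝ) * D (k + 1 + j)) / D k)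
      (gammaStar α) := by
    refine ⟨fun k => ?_, fun k => ?_, ?_⟩
    · show Even (nicfA α (k + 1) - lamStar α (k + 1))
      unfold lamStar
      split_ifs with e
      · refine e.sub_odd ?_
        exact Odd.pow (by decide)
      · simpa using e
    · show (∑' j : ℕ, (lamStar α (k + 1 + j) : ℝ) * D (k + 1 + j)) / D k =
        nicfT α k * ((lamStar α (k + 1) : ℝ) +
          (∑' j : ℕ, (lamStar α (k + 1 + 1 + j) : ℝ) * D (k + 1 + 1 + j)) / D (k + 1))
      rw [Trec k]
      have h1 := (Dpos k).ne'
      have h2 := (h.pos k).ne'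
      rw [Dsucc k]
      field_simp
    · show 2 * gammaStar α = 1 + α +
        (∑' j : ℕ, (lamStar α (0 + 1 + j) : ℝ) * D (0 + 1 + j)) / D 0
      rw [hgam, hD, zD, div_one]
  exact star_lower (σ := fun k => (-1) ^ oddIdx α k) h hTS
    (fun k => neg_one_pow_eq_or ℤ _)
    (fun k hk => by
      have hk' : Odd (nicfA α (k + 1)) := hk
      have e := oddIdx_succ α k
      rw [if_pos hk'] at e
      constructor
      · show lamStar α (k + 1) = _
        rw [lamStar, if_pos hk', e, pow_succ]; ring
      · show (-1 : ℤ) ^ oddIdx α (k + 1) = _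
        rw [e, pow_succ]; ring)
    (fun k hk => by
      have hk' : ¬ Odd (nicfA α (k + 1)) := Int.not_odd_iff_even.2 hk
      have e := oddIdx_succ α k
      rw [if_neg hk'] at e
      constructor
      · show lamStar α (k + 1) = _
        rw [lamStar, if_neg hk']
      · show (-1 : ℤ) ^ oddIdx α (k + 1) = _
        rw [e, add_zero])
    Tbd hN hbd

/-- Theorem 7 (regular continued fraction case): if the NICF expansion of `α` is regular
(all `ε_i = +1`) and `M(α,γ) > M(α,γ_*) - R_*⁻³`, then `|t_i| < 2a_i/(R_*-1)` for almost
all `i`, and `a_k = R` forces `t_k = ±1` (`R` odd) or `t_k = 0` (`R` even). -/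
theorem stmt8 (α γ : ℝ) (hirr : Irrational α) (h0 : 0 < α) (h12 : α < 1 / 2)
    (heps : ∀ i, nicfE α i = 1)
    (R : ℕ) (hR4 : 4 ≤ R)
    (hbd : ∀ᶠ i in Filter.atTop, (R : ℤ) ≤ nicfA α i)
    (hfreq : ∃ᶠ i in Filter.atTop, nicfA α i = (R : ℤ))
    (hγ0 : 0 ≤ γ) (hγ1 : γ < 1)
    (hγnl : ¬∃ p q : ℤ, γ = (p : ℝ) + (q : ℝ) * α)
    (Rs : ℝ) (hRs : Rs = if Odd R then (R : ℝ) else (R : ℝ) + 1)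
    (hM : Mval α γ > Mval α (gammaStar α) - 1 / Rs ^ 3) :
    (∀ᶠ i in Filter.atTop,
        ((|2 * cCoef α γ i - nicfA α i| : ℤ) : ℝ) < 2 * (nicfA α i : ℝ) / (Rs - 1)) ∧
      ∀ᶠ k in Filter.atTop, nicfA α k = (R : ℤ) →
        (Odd R →
          2 * cCoef α γ k - nicfA α k = 1 ∨ 2 * cCoef α γ k - nicfA α k = -1) ∧
        (Even R → 2 * cCoef α γ k - nicfA α k = 0) := by
  have h := nicf_CFS hirr h0 h12 heps
  have hg := nicf_good hirr h0 h12 heps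
  have hR4' : (4 : ℝ) ≤ R := by exact_mod_cast hR4
  have hodd5 : Odd R → 5 ≤ R := by
    rintro ⟨r, hr⟩; omega
  have hN : 5 ≤ Rs := by
    rw [hRs]
    split_ifs with e
    · exact_mod_cast hodd5 e
    · linarith
  have hbd' : ∀ᶠ k in atTop, (R : ℤ) ≤ nicfA α (k + 1) :=
    (tendsto_add_atTop_nat 1).eventually hbd
  have hlow := star_Mval hirr h0 h12 heps hN (by
    filter_upwards [hbd'] with k hk
    have hk' : (R : ℝ) ≤ nicfA α (k + 1) := by exact_mod_cast hk
    rw [hRs]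
    split_ifs with e
    · exact ⟨fun _ => hk', by linarith⟩
    · refine ⟨fun ho => ?_, by linarith⟩
      have hne : (R : ℤ) ≠ nicfA α (k + 1) := by
        intro he
        rw [← he] at ho
        exact e (by exact_mod_cast ho)
      have : (R : ℤ) + 1 ≤ nicfA α (k + 1) := by omega
      exact_mod_cast this)
  have hgb : ∀ k, 0 ≤ gSeq α γ k ∧ gSeq α γ k < 1 := by
    intro k
    cases k with
    | zero => exact ⟨hγ0, hγ1⟩
    | succ k => exact ⟨Int.fract_nonneg _, Int.fract_lt_one _⟩
  have hfirst := gamma_part (a := fun k => nicfA α (k + 1)) (c := fun k => cCoef α γ (k + 1))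
    (A := nicfT α) (g := gSeq α γ) h (fun k => (hgb k).1) (fun k => (hgb k).2)
    (fun k => by
      show 0 ≤ ⌊gSeq α γ k / nicfT α k⌋
      exact Int.floor_nonneg.2 (div_nonneg (hgb k).1 (hg k).2.1.le))
    (fun k => by
      show ⌊gSeq α γ k / nicfT α k⌋ ≤ nicfA α (k + 1)
      rw [(hg k).2.2.2.1]
      apply Int.floor_le_floor
      rw [div_eq_mul_inv]
      exact mul_le_of_le_one_left (inv_nonneg.2 (hg k).2.1.le) (hgb k).2.le)
    (fun k => by
      show gSeq α γ k = nicfT α k * ((⌊gSeq α γ k / nicfT α k⌋ : ℝ) +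
        Int.fract (gSeq α γ k / nicfT α k))
      rw [Int.floor_add_fract]
      exact (mul_div_cancel₀ _ (hg k).2.1.ne').symm)
    (fun n m he => hγnl ⟨-m, n, by
      have he' : (n : ℝ) * α - γ = m := he
      push_cast
      linarith⟩)
    (by
      filter_upwards [hbd'] with k hk
      show 4 ≤ nicfA α (k + 1)
      have : (4 : ℤ) ≤ R := by exact_mod_cast hR4
      omega)
    hN (by
      show (1 - 2 / (Rs - 1)) / 4 < Mval α γ
      linarith)
  have hfirst' : ∀ᶠ i in Filter.atTop,
      ((|2 * cCoef α γ i - nicfA α i| : ℤ) : ℝ) < 2 * (nicfA α i : ℝ) / (Rs - 1) := by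
    obtain ⟨K, hK⟩ := eventually_atTop.1 hfirst
    refine eventually_atTop.2 ⟨K + 1, fun i hi => ?_⟩
    obtain ⟨j, rfl⟩ : ∃ j, i = j + 1 := ⟨i - 1, by omega⟩
    exact hK j (by omega)
  refine ⟨hfirst', ?_⟩
  filter_upwards [hfirst'] with k hk hkR
  rw [hkR] at hk ⊢
  have hN1 : 0 < Rs - 1 := by linarith
  rw [lt_div_iff₀ hN1] at hk
  constructor
  · intro ho
    rw [if_pos ho] at hRs
    have h5 : (5 : ℝ) ≤ R := by exact_mod_cast hodd5 ho
    have hlt : |2 * cCoef α γ k - (R : ℤ)| < 3 := by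
      by_contra hc
      push Not at hc
      have hc' : (3 : ℝ) ≤ ((|2 * cCoef α γ k - (R : ℤ)| : ℤ) : ℝ) := by exact_mod_cast hc
      rw [hRs] at hk hN1
      have := mul_le_mul_of_nonneg_right hc' hN1.le
      push_cast at hk this
      linarith
    obtain ⟨r, hr⟩ := ho
    rw [abs_lt] at hlt
    omega
  · intro he
    rw [if_neg (Nat.not_odd_iff_even.2 he)] at hRs
    have hlt : |2 * cCoef α γ k - (R : ℤ)| < 2 := by
      by_contra hc
      push Not at hc
      have hc' : (2 : ℝ) ≤ ((|2 * cCoef α γ k - (R : ℤ)| : ℤ) : ℝ) := by exact_mod_cast hc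
      rw [hRs] at hk hN1
      have := mul_le_mul_of_nonneg_right hc' hN1.le
      push_cast at hk this
      linarith
    obtain ⟨r, hr⟩ := he
    rw [abs_lt] at hlt
    omega
end

section
/- Suppose α has an adjusted nearest integer expansion with liminf_{i→∞} a_i = 2, and let γ_* be the associated point with t_i = λ_i and d_n^± as defined. Then every index i lies in S(γ_*), and for all i ≥ 1, |d_i^+| ≤ min{α_i, 2/5} and |d_i^−| ≤ min{1/2, (3/2)ᾱ_i}. -/
open Filter Finset

attribute [local instance] Classical.propDecidable

/-- Denominators `q_i` of a semi-regular continued fraction with partial quotients `a`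
and signs `e`: `q_0 = 1`, `q_1 = a_1`, `q_i = a_i q_{i-1} + ε_i q_{i-2}`. -/
noncomputable def qs (a e : ℕ → ℤ) : ℕ → ℤ
  | 0 => 1
  | 1 => a 1
  | i + 2 => a (i + 2) * qs a e (i + 1) + e (i + 2) * qs a e i

/-- Reversed tails `ᾱ_i = q_{i-1}/q_i` (with `ᾱ_0 = 0`). -/
noncomputable def ab (a e : ℕ → ℤ) (i : ℕ) : ℝ :=
  if i = 0 then 0 else (qs a e (i - 1) : ℝ) / (qs a e i : ℝ)

/-- An adjusted nearest integer expansion of `α`: a semi-regular continued fraction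
`α = 1/(a_1 + ε_2/(a_2 + ε_3/(a_3 + ⋯)))` with tails `t i = α_i`, satisfying the
conditions (i)-(iv) of an adjusted expansion. -/
structure ANIE (α : ℝ) where
  /-- partial quotients `a_i` (for `i ≥ 1`) -/
  a : ℕ → ℤ
  /-- signs `ε_i` -/
  e : ℕ → ℤ
  /-- tails: `t i = α_i`, `t 0 = α` -/
  t : ℕ → ℝ
  ha : ∀ i, 1 ≤ i → 2 ≤ a i
  he : ∀ i, e i = 1 ∨ e i = -1
  he1 : e 1 = 1
  ht0 : t 0 = α
  htpos : ∀ i, 0 < t i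
  htlt1 : ∀ i, t i < 1
  hrec : ∀ i, t i = 1 / ((a (i + 1) : ℝ) + (e (i + 2) : ℝ) * t (i + 1))
  /-- condition (i): `a_i = 2` implies `ε_i = +1` or `ε_{i+1} = +1` -/
  hcond1 : ∀ i, 1 ≤ i → a i = 2 → e i = 1 ∨ e (i + 1) = 1
  /-- condition (ii): if `a_i = 2`, `ε_i = -1` then `1/ᾱ_{i-1} - 1/α_i ≥ 1` -/
  hcond2 : ∀ i, 1 ≤ i → a i = 2 → e i = -1 → 1 / ab a e (i - 1) - 1 / t i ≥ 1
  /-- condition (iii): if `a_i = 2`, `ε_{i+1} = -1` then `1/α_i - 1/ᾱ_{i-1} > 1` -/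
  hcond3 : ∀ i, 1 ≤ i → a i = 2 → e (i + 1) = -1 → 1 / t i - 1 / ab a e (i - 1) > 1
  /-- condition (iv): no block `2, (-3,)^k, -2` in the sequence `(ε_i a_i)` -/
  hcond4 : ∀ i k, 1 ≤ i →
    ¬(e i * a i = 2 ∧ (∀ j, j < k → e (i + 1 + j) * a (i + 1 + j) = -3) ∧
        e (i + 1 + k) * a (i + 1 + k) = -2)

namespace ANIE

variable {α : ℝ}

/-- `D n = D_{n-1} = α_0 α_1 ⋯ α_{n-1}` (so `D 0 = 1`, `D 1 = α`). -/
noncomputable def D (E : ANIE α) (n : ℕ) : ℝ := ∏ j ∈ Finset.range n, E.t j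

/-- The number of indices `1 ≤ k ≤ i` with `a_k` odd. -/
noncomputable def oddIdx (E : ANIE α) (i : ℕ) : ℕ :=
  ((Finset.Icc 1 i).filter fun k => Odd (E.a k)).card

/-- `λ_i`: zero if `a_i` is even, `(-1)^j` if `a_i = a_{n_j}` is the `j`-th odd partial
quotient. -/
noncomputable def lam (E : ANIE α) (i : ℕ) : ℤ :=
  if Odd (E.a i) then (-1) ^ E.oddIdx i else 0

/-- `γ_* = Σ_{i≥1} (a_i - 1 + ε_i + λ_i)/2 · D_{i-1}`. -/
noncomputable def gammaStar (E : ANIE α) : ℝ :=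
  ∑' k : ℕ,
    (((E.a (k + 1) : ℝ) - 1 + (E.e (k + 1) : ℝ) + (E.lam (k + 1) : ℝ)) / 2) * E.D (k + 1)

/-- `ᾱ_i = q_{i-1}/q_i`. -/
noncomputable def abar (E : ANIE α) (i : ℕ) : ℝ := ab E.a E.e i

/-- `δ_i = -(-ε_1)(-ε_2)⋯(-ε_{i+1})`. -/
noncomputable def delta (E : ANIE α) (i : ℕ) : ℤ := -∏ j ∈ Finset.Icc 1 (i + 1), (-E.e j)

/-- `d_n^- = (Σ_{i=1}^n t_i δ_{i-1} q_{i-1}) / (δ_{n-1} q_n)` for `γ_*` (`t_i = λ_i`). -/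
noncomputable def dminus (E : ANIE α) (n : ℕ) : ℝ :=
  (∑ i ∈ Finset.Icc 1 n, (E.lam i : ℝ) * (E.delta (i - 1) : ℝ) * (qs E.a E.e (i - 1) : ℝ)) /
    ((E.delta (n - 1) : ℝ) * (qs E.a E.e n : ℝ))

/-- `d_n^+ = (Σ_{i=n+1}^∞ t_i D_{i-1}) / D_{n-1}` for `γ_*` (`t_i = λ_i`). -/
noncomputable def dplus (E : ANIE α) (n : ℕ) : ℝ :=
  (∑' k : ℕ, (E.lam (n + 1 + k) : ℝ) * E.D (n + 1 + k)) / E.D n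

/-- `i ∈ S(γ_*)`: `|d_i^-| ≤ 1 - ᾱ_i` and `-(1-ε_{i+1}α_i) ≤ d_i^+ ≤ 1+ε_{i+1}α_i`. -/
def inS (E : ANIE α) (i : ℕ) : Prop :=
  |E.dminus i| ≤ 1 - E.abar i ∧
    -(1 - (E.e (i + 1) : ℝ) * E.t i) ≤ E.dplus i ∧
      E.dplus i ≤ 1 + (E.e (i + 1) : ℝ) * E.t i

end ANIE

namespace ANIE

variable {α : ℝ}

lemma oddIdx_succ_odd (E : ANIE α) (n : ℕ) (h : Odd (E.a (n + 1))) :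
    E.oddIdx (n + 1) = E.oddIdx n + 1 := by
  unfold oddIdx
  rw [← Finset.insert_Icc_right_eq_Icc_add_one (by omega), Finset.filter_insert, if_pos h,
    Finset.card_insert_of_notMem (by simp)]

lemma oddIdx_succ_even (E : ANIE α) (n : ℕ) (h : ¬ Odd (E.a (n + 1))) :
    E.oddIdx (n + 1) = E.oddIdx n := by
  unfold oddIdx
  rw [← Finset.insert_Icc_right_eq_Icc_add_one (by omega), Finset.filter_insert, if_neg h]

/-- the sign of the next nonzero `λ` after index `n` -/
noncomputable def sg (E : ANIE α) (n : ℕ) : ℝ := (-1) ^ (E.oddIdx n + 1)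

lemma sg_sq (E : ANIE α) (n : ℕ) : E.sg n * E.sg n = 1 := by
  unfold sg
  rw [← mul_pow]; norm_num

lemma abs_sg (E : ANIE α) (n : ℕ) : |E.sg n| = 1 := by
  unfold sg
  simp

lemma sg_odd (E : ANIE α) (n : ℕ) (h : Odd (E.a (n + 1))) :
    E.sg (n + 1) = - E.sg n ∧ (E.lam (n + 1) : ℝ) = E.sg n := by
  unfold sg lam
  rw [if_pos h, E.oddIdx_succ_odd n h]
  push_cast
  constructor <;> ring

lemma sg_even (E : ANIE α) (n : ℕ) (h : ¬ Odd (E.a (n + 1))) :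
    E.sg (n + 1) = E.sg n ∧ (E.lam (n + 1) : ℝ) = 0 := by
  unfold sg lam
  rw [if_neg h, E.oddIdx_succ_even n h]
  simp

lemma D_pos (E : ANIE α) (n : ℕ) : 0 < E.D n :=
  Finset.prod_pos fun j _ => E.htpos j

lemma D_succ (E : ANIE α) (n : ℕ) : E.D (n + 1) = E.D n * E.t n := by
  unfold D
  rw [Finset.prod_range_succ]

lemma e_real (E : ANIE α) (n : ℕ) : (E.e n : ℝ) = 1 ∨ (E.e n : ℝ) = -1 := by
  rcases E.he n with h | h <;> simp [h]

lemma t_mul (E : ANIE α) (n : ℕ) :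
    0 < (E.a (n + 1) : ℝ) + E.e (n + 2) * E.t (n + 1) ∧
      E.t n * ((E.a (n + 1) : ℝ) + E.e (n + 2) * E.t (n + 1)) = 1 := by
  have h := E.hrec n
  have hp := E.htpos n
  have h1 : 0 < (E.a (n + 1) : ℝ) + E.e (n + 2) * E.t (n + 1) := by
    rw [h] at hp
    exact one_div_pos.mp hp
  refine ⟨h1, ?_⟩
  rw [h, one_div, inv_mul_cancel₀ h1.ne']

lemma t_le_half (E : ANIE α) (n : ℕ) (h : E.a (n + 1) ≠ 2 ∨ E.e (n + 2) = 1) :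
    E.t n ≤ 1 / 2 := by
  obtain ⟨h1, h2⟩ := E.t_mul n
  have h3 := E.htpos n
  have h4 := E.htpos (n + 1)
  have h5 := E.htlt1 (n + 1)
  have h6 := E.ha (n + 1) (by omega)
  have h7 : 2 ≤ (E.a (n + 1) : ℝ) + E.e (n + 2) * E.t (n + 1) := by
    rcases h with h | h
    · have : (3 : ℤ) ≤ E.a (n + 1) := by omega
      have : (3 : ℝ) ≤ E.a (n + 1) := by exact_mod_cast this
      rcases E.e_real (n + 2) with he | he <;> rw [he] <;> linarith
    · have : (2 : ℝ) ≤ E.a (n + 1) := by exact_mod_cast h6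
      rw [h]; push_cast; linarith
  nlinarith

/-- if `ε_{n+1} = -1` then `α_n ≤ 1/2` -/
lemma t_le_half' (E : ANIE α) (n : ℕ) (h : E.e (n + 1) = -1) : E.t n ≤ 1 / 2 := by
  apply E.t_le_half
  by_contra! hc
  rcases E.hcond1 (n + 1) (by omega) hc.1 with h' | h'
  · omega
  · exact hc.2 h'

lemma t_le_odd (E : ANIE α) (n : ℕ) (h : Odd (E.a (n + 1))) : E.t n ≤ 2 / 5 := by
  obtain ⟨h1, h2⟩ := E.t_mul n
  have h3 := E.htpos n
  have h4 := E.htpos (n + 1)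
  have h6 := E.ha (n + 1) (by omega)
  have h8 : (3 : ℤ) ≤ E.a (n + 1) := by
    obtain ⟨k, hk⟩ := h
    omega
  have h8' : (3 : ℝ) ≤ E.a (n + 1) := by exact_mod_cast h8
  have h7 : 5 / 2 ≤ (E.a (n + 1) : ℝ) + E.e (n + 2) * E.t (n + 1) := by
    rcases E.he (n + 2) with he | he
    · rw [he]; push_cast; linarith
    · have := E.t_le_half' (n + 1) he
      rw [he]; push_cast; linarith
  nlinarith

/-- partial sums for `d_n^+` -/
noncomputable def uu (E : ANIE α) (n N : ℕ) : ℝ :=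
  (∑ k ∈ Finset.range N, (E.lam (n + 1 + k) : ℝ) * E.D (n + 1 + k)) / E.D n

lemma uu_succ (E : ANIE α) (n N : ℕ) :
    E.uu n (N + 1) = E.t n * (E.lam (n + 1) + E.uu (n + 1) N) := by
  unfold uu
  rw [Finset.sum_range_succ']
  have h0 := E.D_pos n
  have ht := E.htpos n
  have h : ∑ k ∈ Finset.range N, (E.lam (n + 1 + (k + 1)) : ℝ) * E.D (n + 1 + (k + 1)) =
      ∑ k ∈ Finset.range N, (E.lam (n + 1 + 1 + k) : ℝ) * E.D (n + 1 + 1 + k) :=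
    Finset.sum_congr rfl fun k _ => by rw [show n + 1 + (k + 1) = n + 1 + 1 + k by omega]
  rw [h, add_zero, E.D_succ n]
  field_simp
  ring

lemma uu_bound (E : ANIE α) (N : ℕ) : ∀ n, 0 ≤ E.sg n * E.uu n N ∧
    E.sg n * E.uu n N ≤ min (E.t n) (min (2 / 5) (1 - E.t n)) := by
  induction N with
  | zero =>
    intro n
    have h1 := E.htpos n
    have h2 := E.htlt1 n
    have : E.uu n 0 = 0 := by simp [uu]
    rw [this, mul_zero]
    refine ⟨le_refl _, le_min h1.le (le_min (by norm_num) (by linarith))⟩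
  | succ N ih =>
    intro n
    obtain ⟨i0, i1⟩ := ih (n + 1)
    rw [le_min_iff, le_min_iff] at i1
    obtain ⟨i1, i2, i3⟩ := i1
    have h1 := E.htpos n
    have h2 := E.htlt1 n
    rw [uu_succ]
    by_cases ho : Odd (E.a (n + 1))
    · obtain ⟨s1, s2⟩ := E.sg_odd n ho
      have key : E.sg n * (E.t n * (E.lam (n + 1) + E.uu (n + 1) N)) =
          E.t n * (1 - E.sg (n + 1) * E.uu (n + 1) N) := by
        rw [s2, s1]
        linear_combination E.t n * E.sg_sq n
      rw [key]
      set y := E.sg (n + 1) * E.uu (n + 1) N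
      have h3 := E.t_le_odd n ho
      have h4 : E.t n * (1 - y) ≤ E.t n := by nlinarith
      exact ⟨mul_nonneg h1.le (by linarith),
        le_min h4 (le_min (by linarith) (by linarith))⟩
    · obtain ⟨s1, s2⟩ := E.sg_even n ho
      have key : E.sg n * (E.t n * (E.lam (n + 1) + E.uu (n + 1) N)) =
          E.t n * (E.sg (n + 1) * E.uu (n + 1) N) := by
        rw [s2, s1]
        ring
      rw [key]
      set y := E.sg (n + 1) * E.uu (n + 1) N
      have h4 : E.t n * y ≤ E.t n := by nlinarith
      have h5 : E.t n * y ≤ y := by nlinarith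
      refine ⟨mul_nonneg h1.le i0, le_min h4 (le_min (by linarith) ?_)⟩
      by_cases hc : E.a (n + 1) ≠ 2 ∨ E.e (n + 2) = 1
      · have := E.t_le_half n hc
        linarith
      · push Not at hc
        have he : E.e (n + 2) = -1 := (E.he (n + 2)).resolve_left hc.2
        obtain ⟨_, h7⟩ := E.t_mul n
        rw [hc.1, he] at h7
        push_cast at h7
        nlinarith

lemma dplus_bound (E : ANIE α) (n : ℕ) :
    |E.dplus n| ≤ min (E.t n) (min (2 / 5) (1 - E.t n)) := by
  have h1 := E.htpos n
  have h2 := E.htlt1 n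
  by_cases hs : Summable (fun k : ℕ => (E.lam (n + 1 + k) : ℝ) * E.D (n + 1 + k))
  · have ht : Tendsto (fun N => |E.uu n N|) atTop (nhds |E.dplus n|) :=
      (hs.hasSum.tendsto_sum_nat.div_const (E.D n)).abs
    refine le_of_tendsto' ht fun N => ?_
    obtain ⟨b0, b1⟩ := E.uu_bound N n
    have : |E.uu n N| = E.sg n * E.uu n N := by
      rw [← abs_of_nonneg b0, abs_mul, E.abs_sg, one_mul]
    rw [this]
    exact b1
  · unfold dplus
    rw [tsum_eq_zero_of_not_summable hs, zero_div, abs_zero]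
    exact le_min h1.le (le_min (by norm_num) (by linarith))

lemma delta_succ (E : ANIE α) (n : ℕ) : E.delta (n + 1) = E.delta n * (-E.e (n + 2)) := by
  unfold delta
  rw [← Finset.insert_Icc_right_eq_Icc_add_one (by omega), Finset.prod_insert (by simp)]
  ring

lemma delta_ne (E : ANIE α) (n : ℕ) : (E.delta n : ℝ) ≠ 0 := by
  have : E.delta n ≠ 0 := by
    unfold delta
    rw [neg_ne_zero, Finset.prod_ne_zero_iff]
    intro j _
    rcases E.he j with h | h <;> simp [h]
  exact_mod_cast this

lemma qs_pos (E : ANIE α) (n : ℕ) : 0 < qs E.a E.e n ∧ qs E.a E.e n < qs E.a E.e (n + 1) := by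
  induction n with
  | zero =>
    have := E.ha 1 le_rfl
    simp only [qs]
    omega
  | succ n ih =>
    obtain ⟨i1, i2⟩ := ih
    have h := E.ha (n + 2) (by omega)
    have hq : qs E.a E.e (n + 2) = E.a (n + 2) * qs E.a E.e (n + 1) + E.e (n + 2) * qs E.a E.e n := by
      simp only [qs]
    refine ⟨by omega, ?_⟩
    rw [show n + 1 + 1 = n + 2 from rfl, hq]
    rcases E.he (n + 2) with he | he <;> rw [he] <;> nlinarith

lemma abar_zero (E : ANIE α) : E.abar 0 = 0 := by simp [abar, ab]

lemma abar_succ (E : ANIE α) (n : ℕ) :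
    E.abar (n + 1) = (qs E.a E.e n : ℝ) / (qs E.a E.e (n + 1) : ℝ) := by
  simp [abar, ab]

lemma abar_bd (E : ANIE α) (n : ℕ) : 0 ≤ E.abar n ∧ E.abar n < 1 := by
  rcases n with _ | n
  · rw [abar_zero]; norm_num
  · rw [abar_succ]
    obtain ⟨h1, h2⟩ := E.qs_pos n
    have h1' : (0 : ℝ) < qs E.a E.e n := by exact_mod_cast h1
    have h2' : (qs E.a E.e n : ℝ) < qs E.a E.e (n + 1) := by exact_mod_cast h2
    exact ⟨div_nonneg h1'.le (h1'.trans h2').le, by rw [div_lt_one (by linarith)]; exact h2'⟩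

lemma abar_mul (E : ANIE α) (n : ℕ) :
    E.abar (n + 1) * ((E.a (n + 1) : ℝ) + E.e (n + 1) * E.abar n) = 1 := by
  have h2 : (0 : ℝ) < qs E.a E.e (n + 1) := by exact_mod_cast (E.qs_pos (n + 1)).1
  have h1 : (0 : ℝ) < qs E.a E.e n := by exact_mod_cast (E.qs_pos n).1
  rcases n with _ | n
  · rw [abar_zero, abar_succ]
    simp only [qs] at h2 ⊢
    push_cast
    field_simp
    simp
  · rw [abar_succ, abar_succ]
    have hq : (qs E.a E.e (n + 1 + 1) : ℝ) =
        E.a (n + 2) * qs E.a E.e (n + 1) + E.e (n + 2) * qs E.a E.e n := by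
      simp only [qs]; push_cast; ring
    rw [div_mul_eq_mul_div, div_eq_one_iff_eq h2.ne', hq]
    field_simp

lemma dminus_zero (E : ANIE α) : E.dminus 0 = 0 := by simp [dminus]

lemma dminus_succ (E : ANIE α) (n : ℕ) :
    E.dminus (n + 1) = E.abar (n + 1) * (E.lam (n + 1) - E.e (n + 1) * E.dminus n) := by
  have h2 : (0 : ℝ) < qs E.a E.e (n + 1) := by exact_mod_cast (E.qs_pos (n + 1)).1
  have h1 : (0 : ℝ) < qs E.a E.e n := by exact_mod_cast (E.qs_pos n).1
  rcases n with _ | n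
  · rw [dminus_zero, abar_succ]
    have := E.delta_ne 0
    simp only [dminus, zero_add, Finset.Icc_self, Finset.sum_singleton, Nat.sub_self]
    field_simp
    simp
  · rw [abar_succ]
    unfold dminus
    rw [← Finset.insert_Icc_right_eq_Icc_add_one (by omega : 1 ≤ n + 1 + 1),
      Finset.sum_insert (by simp)]
    simp only [Nat.add_sub_cancel]
    set S := ∑ i ∈ Finset.Icc 1 (n + 1),
      (E.lam i : ℝ) * (E.delta (i - 1) : ℝ) * (qs E.a E.e (i - 1) : ℝ)
    have hd := E.delta_ne n
    rw [E.delta_succ n]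
    push_cast
    rcases E.e_real (n + 1 + 1) with he | he <;> rw [show n + 2 = n + 1 + 1 from rfl, he] <;>
      field_simp <;> ring

lemma dminus_bound (E : ANIE α) (n : ℕ) :
    -(1 / 2) ≤ E.sg n * E.dminus n ∧ -(1 - E.abar n) ≤ E.sg n * E.dminus n ∧
      E.sg n * E.dminus n ≤ (1 - E.abar n) / 2 := by
  induction n with
  | zero => rw [dminus_zero, abar_zero]; norm_num
  | succ n ih =>
    obtain ⟨i1, i2, i3⟩ := ih
    obtain ⟨c0, c1⟩ := E.abar_bd n
    obtain ⟨b0, b1⟩ := E.abar_bd (n + 1)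
    have hm := E.abar_mul n
    have ha := E.ha (n + 1) (by omega)
    rw [dminus_succ]
    by_cases ho : Odd (E.a (n + 1))
    · obtain ⟨s1, s2⟩ := E.sg_odd n ho
      have h3 : (3 : ℝ) ≤ E.a (n + 1) := by
        have : (3 : ℤ) ≤ E.a (n + 1) := by
          obtain ⟨k, hk⟩ := ho
          omega
        exact_mod_cast this
      have key : E.sg (n + 1) * (E.abar (n + 1) * (E.lam (n + 1) - E.e (n + 1) * E.dminus n)) =
          E.abar (n + 1) * (-1 + E.e (n + 1) * (E.sg n * E.dminus n)) := by
        rw [s2, s1]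
        linear_combination (-E.abar (n + 1)) * E.sg_sq n
      rw [key]
      set x := E.sg n * E.dminus n
      set b := E.abar (n + 1)
      set c := E.abar n
      set A : ℝ := ((E.a (n + 1) : ℤ) : ℝ)
      have hb3 : b * 3 ≤ b * A := mul_le_mul_of_nonneg_left h3 b0
      rcases E.e_real (n + 1) with he | he <;> rw [he] at hm ⊢
      · have hbc : 0 ≤ b * c := mul_nonneg b0 c0
        have h13 : b ≤ 1 / 3 := by nlinarith
        refine ⟨by nlinarith, by nlinarith, by nlinarith⟩
      · have h12 : b ≤ 1 / 2 := by nlinarith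
        have h4 : b * x ≤ b * ((1 - c) / 2) := mul_le_mul_of_nonneg_left i3 b0
        refine ⟨by nlinarith, by nlinarith, by nlinarith⟩
    · obtain ⟨s1, s2⟩ := E.sg_even n ho
      have key : E.sg (n + 1) * (E.abar (n + 1) * (E.lam (n + 1) - E.e (n + 1) * E.dminus n)) =
          E.abar (n + 1) * (-(E.e (n + 1) * (E.sg n * E.dminus n))) := by
        rw [s2, s1]
        ring
      rw [key]
      have h24 : E.a (n + 1) = 2 ∨ (4 : ℝ) ≤ E.a (n + 1) := by
        rcases eq_or_ne (E.a (n + 1)) 2 with h | h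
        · exact Or.inl h
        · right
          have : (4 : ℤ) ≤ E.a (n + 1) := by
            rw [Int.not_odd_iff_even] at ho
            obtain ⟨k, hk⟩ := ho
            omega
          exact_mod_cast this
      set x := E.sg n * E.dminus n
      have hx : x ≤ 1 / 2 := by linarith
      have hex : |E.e (n + 1) * x| ≤ 1 / 2 := by
        rw [abs_le]
        rcases E.e_real (n + 1) with he | he <;> rw [he] <;> constructor <;> linarith
      rw [abs_le] at hex
      obtain ⟨x1, x2⟩ := hex
      have main : E.abar (n + 1) ≤ 1 / 2 →
          -(1 / 2) ≤ E.abar (n + 1) * (-(E.e (n + 1) * x)) ∧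
          -(1 - E.abar (n + 1)) ≤ E.abar (n + 1) * (-(E.e (n + 1) * x)) ∧
          E.abar (n + 1) * (-(E.e (n + 1) * x)) ≤ (1 - E.abar (n + 1)) / 2 := by
        intro hb
        refine ⟨by nlinarith, by nlinarith, by nlinarith⟩
      rcases h24 with h2 | h4
      · rcases E.e_real (n + 1) with he | he
        · apply main
          rw [h2, he] at hm
          push_cast at hm
          nlinarith [mul_nonneg b0 c0]
        · rw [h2, he] at hm
          push_cast at hm
          rw [he]
          have p1 := mul_le_mul_of_nonneg_left i1 b0
          have p2 := mul_le_mul_of_nonneg_left i2 b0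
          have p3 := mul_le_mul_of_nonneg_left i3 b0
          refine ⟨by nlinarith, by nlinarith, by nlinarith⟩
      · apply main
        have := mul_le_mul_of_nonneg_left h4 b0
        rcases E.e_real (n + 1) with he | he <;> rw [he] at hm <;>
          nlinarith [mul_nonneg b0 c0]

lemma dminus_abs (E : ANIE α) (n : ℕ) :
    |E.dminus n| ≤ 1 / 2 ∧ |E.dminus n| ≤ 1 - E.abar n := by
  obtain ⟨h1, h2, h3⟩ := E.dminus_bound n
  obtain ⟨c0, c1⟩ := E.abar_bd n
  have : |E.dminus n| = |E.sg n * E.dminus n| := by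
    rw [abs_mul, E.abs_sg, one_mul]
  rw [this, abs_le, abs_le]
  refine ⟨⟨h1, by linarith⟩, ⟨h2, by linarith⟩⟩

lemma lam_abs (E : ANIE α) (n : ℕ) : |(E.lam n : ℝ)| ≤ 1 := by
  unfold lam
  split_ifs <;> simp

lemma dminus_abs' (E : ANIE α) (n : ℕ) : |E.dminus (n + 1)| ≤ 3 / 2 * E.abar (n + 1) := by
  rw [dminus_succ, abs_mul, abs_of_nonneg (E.abar_bd (n + 1)).1, mul_comm]
  apply mul_le_mul_of_nonneg_right _ (E.abar_bd (n + 1)).1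
  have h1 := (E.dminus_abs n).1
  have h2 := E.lam_abs (n + 1)
  have h3 : |(E.e (n + 1) : ℝ) * E.dminus n| = |E.dminus n| := by
    rcases E.e_real (n + 1) with he | he <;> simp [he]
  have := abs_sub (E.lam (n + 1) : ℝ) (E.e (n + 1) * E.dminus n)
  linarith

end ANIE

/-- Lemma 3 (adjusted expansion, `R = 2` case): every `i` lies in `S(γ_*)` and
`|d_i^+| ≤ min{α_i, 2/5}`, `|d_i^-| ≤ min{1/2, (3/2)ᾱ_i}`. -/
theorem stmt10 (α : ℝ) (hirr : Irrational α) (h0 : 0 < α) (h12 : α < 1 / 2)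
    (E : ANIE α) (hfreq : ∃ᶠ i in Filter.atTop, E.a i = 2) :
    (∀ i, 1 ≤ i → E.inS i) ∧
      ∀ i, 1 ≤ i →
        |E.dplus i| ≤ min (E.t i) (2 / 5) ∧
          |E.dminus i| ≤ min (1 / 2) (3 / 2 * E.abar i) := by
  constructor
  · intro i hi
    have h := E.dplus_bound i
    rw [le_min_iff, le_min_iff] at h
    obtain ⟨h1, _, h3⟩ := h
    have ht := E.htpos i
    rw [abs_le] at h3
    refine ⟨(E.dminus_abs i).2, ?_, ?_⟩ <;>
      rcases E.e_real (i + 1) with he | he <;> rw [he] <;> linarith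
  · intro i hi
    obtain ⟨n, rfl⟩ : ∃ n, i = n + 1 := ⟨i - 1, by omega⟩
    have h := E.dplus_bound (n + 1)
    rw [le_min_iff, le_min_iff] at h
    exact ⟨le_min h.1 h.2.1, le_min (E.dminus_abs (n + 1)).1 (E.dminus_abs' n)⟩
end
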